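/- Let κ > 0, σ > 0, r ∈ ℝ, τ > 0 and S₀ > 0, and set a = σ²κτ/S₀. Then the function S ↦ (S/(τσ²))·e^{-rτ}·E[ (A_{σ²τ} − σ²κτ/S)^+ ] is differentiable at S₀ with derivative Δ₀ = e^{-rτ} + (κ/S₀)·e^{-rτ − 2/a} · { a · E[ (a + A_{τσ²})^{-1} · exp( 2·M_{τσ²}/(a + A_{τσ²}) ) ] − E[ exp( 2·M_{τσ²}/(a + A_{τσ²}) ) ] }. -/

import Mathlib

open MeasureTheory ProbabilityTheory Real Set

noncomputable section

/-- A standard one-dimensional Brownian motion `B` (with `B 0 = 0`, continuous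
paths, Gaussian increments and independent increments) on a probability space
with measure `P`. -/
structure IsBrownianMotion {Ω : Type*} [MeasurableSpace Ω]
    (P : Measure Ω) (B : ℝ → Ω → ℝ) : Prop where
  isProbabilityMeasure : IsProbabilityMeasure P
  measurable : ∀ t : ℝ, Measurable (B t)
  start : ∀ ω, B 0 ω = 0
  continuous_paths : ∀ ω, Continuous fun t => B t ω
  gaussian_increments : ∀ s t : ℝ, 0 ≤ s → s ≤ t →
    P.map (fun ω => B t ω - B s ω) = gaussianReal 0 (Real.toNNReal (t - s))
  indep_increments : ∀ t : ℕ → ℝ, Monotone t → 0 ≤ t 0 →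
    iIndepFun
      (fun (i : ℕ) (ω : Ω) => B (t (i + 1)) ω - B (t i) ω) P

/-- The exponential martingale `M_t = exp (B_t - t/2)`. -/
def M {Ω : Type*} (B : ℝ → Ω → ℝ) (t : ℝ) (ω : Ω) : ℝ :=
  Real.exp (B t ω - t / 2)

/-- The time integral `A_t = ∫_0^t exp (B_s - s/2) ds`. -/
def A {Ω : Type*} (B : ℝ → Ω → ℝ) (t : ℝ) (ω : Ω) : ℝ :=
  ∫ s in (0 : ℝ)..t, Real.exp (B s ω - s / 2)

/-- The time integral with drift `ν`: `A_t^{(ν)} = ∫_0^t exp (B_s + (ν - 1/2) s) ds`. -/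
def Adrift {Ω : Type*} (B : ℝ → Ω → ℝ) (ν t : ℝ) (ω : Ω) : ℝ :=
  ∫ s in (0 : ℝ)..t, Real.exp (B s ω + (ν - 1 / 2) * s)

section

def acdE (z : ℝ) : ℝ := ∫ u in (0:ℝ)..1, Real.exp (u * z)
def acdE1 (z : ℝ) : ℝ := ∫ u in (0:ℝ)..1, u * Real.exp (u * z)

lemma acdE_hasDerivAt (z : ℝ) : HasDerivAt acdE (acdE1 z) z := by
  have := (intervalIntegral.hasDerivAt_integral_of_dominated_loc_of_deriv_le (μ := volume)
    (a := 0) (b := 1) (F := fun (z u : ℝ) => Real.exp (u * z))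
    (F' := fun (z u : ℝ) => u * Real.exp (u * z)) (x₀ := z) (s := Metric.ball z 1)
    (bound := fun _ => Real.exp (|z| + 1)) (Metric.ball_mem_nhds z one_pos) ?_ ?_ ?_ ?_ ?_ ?_).2
  · exact this
  · exact Filter.Eventually.of_forall fun x => by
      apply Continuous.aestronglyMeasurable; fun_prop
  · apply Continuous.intervalIntegrable; fun_prop
  · apply Continuous.aestronglyMeasurable; fun_prop
  · refine Filter.Eventually.of_forall fun u hu x hx => ?_
    rw [uIoc_of_le zero_le_one] at hu
    have hx' : |x - z| < 1 := by simpa [Real.dist_eq] using hx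
    have h1 : |x| ≤ |z| + 1 := by
      have := abs_sub_abs_le_abs_sub x z; linarith
    rw [Real.norm_eq_abs, abs_mul, abs_of_pos hu.1, abs_of_pos (Real.exp_pos _)]
    have h2 : u * x ≤ |z| + 1 := by
      have := le_abs_self x
      nlinarith [hu.1, hu.2, abs_nonneg x]
    calc u * Real.exp (u * x) ≤ 1 * Real.exp (|z| + 1) := by
          gcongr
          exact hu.2
      _ = _ := one_mul _
  · exact intervalIntegrable_const
  · refine Filter.Eventually.of_forall fun u hu x hx => ?_
    have := ((hasDerivAt_id x).const_mul u).exp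
    simpa [mul_comm] using this

lemma acdE_continuous : Continuous acdE :=
  continuous_iff_continuousAt.2 fun z => (acdE_hasDerivAt z).continuousAt

lemma acdE1_continuous : Continuous acdE1 := by
  unfold acdE1
  apply intervalIntegral.continuous_parametric_intervalIntegral_of_continuous'
  fun_prop

lemma acdE_mul (z : ℝ) : z * acdE z = Real.exp z - 1 := by
  unfold acdE
  rw [← intervalIntegral.integral_const_mul]
  have : ∀ u ∈ uIcc (0:ℝ) 1, HasDerivAt (fun u => Real.exp (u * z)) (z * Real.exp (u * z)) u := by
    intro u _
    have := ((hasDerivAt_id u).mul_const z).exp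
    simpa [mul_comm] using this
  rw [intervalIntegral.integral_eq_sub_of_hasDerivAt this
    (by apply Continuous.intervalIntegrable; fun_prop)]
  simp

lemma acd_int_mono {f g : ℝ → ℝ} (hf : Continuous f) (hg : Continuous g)
    (h : ∀ u ∈ Icc (0:ℝ) 1, f u ≤ g u) : ∫ u in (0:ℝ)..1, f u ≤ ∫ u in (0:ℝ)..1, g u :=
  intervalIntegral.integral_mono_on zero_le_one (hf.intervalIntegrable _ _)
    (hg.intervalIntegrable _ _) h

lemma acdE_nonneg (z : ℝ) : 0 ≤ acdE z :=
  intervalIntegral.integral_nonneg zero_le_one fun _ _ => (Real.exp_pos _).le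

lemma acdE1_nonneg (z : ℝ) : 0 ≤ acdE1 z :=
  intervalIntegral.integral_nonneg zero_le_one fun _ hu => mul_nonneg hu.1 (Real.exp_pos _).le

lemma acd_aux_exp {u z q : ℝ} (hu : u ∈ Icc (0:ℝ) 1) (h0 : 0 ≤ q) (hz : z ≤ q) :
    Real.exp (u * z) ≤ Real.exp q := by
  apply Real.exp_le_exp.2
  nlinarith [hu.1, hu.2]

lemma acdE_le {z q : ℝ} (h0 : 0 ≤ q) (hz : z ≤ q) : acdE z ≤ Real.exp q := by
  have := acd_int_mono (f := fun u => Real.exp (u * z)) (g := fun _ => Real.exp q)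
    (by fun_prop) (by fun_prop) (fun u hu => acd_aux_exp hu h0 hz)
  simpa [acdE] using this

lemma acdE1_le {z q : ℝ} (h0 : 0 ≤ q) (hz : z ≤ q) : acdE1 z ≤ Real.exp q := by
  have := acd_int_mono (f := fun u => u * Real.exp (u * z)) (g := fun _ => Real.exp q)
    (by fun_prop) (by fun_prop) (fun u hu => by
      have := acd_aux_exp hu h0 hz
      nlinarith [hu.1, hu.2, Real.exp_pos (u * z)])
  simpa [acdE1] using this

lemma acd_exp_near {u z : ℝ} (hu : u ∈ Icc (0:ℝ) 1) (hz : |z| ≤ 1) :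
    |Real.exp (u * z) - 1| ≤ 2 * |z| := by
  have h1 : |u * z| ≤ |z| := by
    rw [abs_mul, abs_of_nonneg hu.1]; nlinarith [hu.2, abs_nonneg z]
  have := Real.abs_exp_sub_one_le (h1.trans hz)
  linarith

lemma acdE_near {z : ℝ} (hz : |z| ≤ 1) : |acdE z - 1| ≤ 2 * |z| := by
  have e : ∫ _ in (0:ℝ)..1, (1 + 2 * |z|) = 1 + 2 * |z| := by simp
  have e' : ∫ _ in (0:ℝ)..1, (1 - 2 * |z|) = 1 - 2 * |z| := by simp
  have h1 := acd_int_mono (f := fun u => Real.exp (u * z)) (g := fun _ => 1 + 2 * |z|)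
    (by fun_prop) (by fun_prop) (fun u hu => by
      have := abs_le.1 (acd_exp_near hu hz); linarith [this.2])
  have h2 := acd_int_mono (g := fun u => Real.exp (u * z)) (f := fun _ => 1 - 2 * |z|)
    (by fun_prop) (by fun_prop) (fun u hu => by
      have := abs_le.1 (acd_exp_near hu hz); linarith [this.1])
  rw [e] at h1; rw [e'] at h2
  change acdE z ≤ _ at h1
  change _ ≤ acdE z at h2
  rw [abs_le]; constructor <;> linarith

lemma acdE1_near {z : ℝ} (hz : |z| ≤ 1) : |acdE1 z - 1/2| ≤ |z| := by
  have e : ∀ C : ℝ, ∫ u in (0:ℝ)..1, (u * C) = C / 2 := by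
    intro C; rw [intervalIntegral.integral_mul_const, integral_id]; ring
  have h1 := acd_int_mono (f := fun u => u * Real.exp (u * z)) (g := fun u => u * (1 + 2 * |z|))
    (by fun_prop) (by fun_prop) (fun u hu => by
      have := abs_le.1 (acd_exp_near hu hz)
      exact mul_le_mul_of_nonneg_left (by linarith [this.2]) hu.1)
  have h2 := acd_int_mono (g := fun u => u * Real.exp (u * z)) (f := fun u => u * (1 - 2 * |z|))
    (by fun_prop) (by fun_prop) (fun u hu => by
      have := abs_le.1 (acd_exp_near hu hz)
      exact mul_le_mul_of_nonneg_left (by linarith [this.1]) hu.1)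
  rw [e] at h1 h2
  change acdE1 z ≤ _ at h1
  change _ ≤ acdE1 z at h2
  rw [abs_le]; constructor <;> linarith

lemma acdE_lip {q z1 z2 : ℝ} (h0 : 0 ≤ q) (h1 : z1 ≤ q) (h2 : z2 ≤ q) :
    |acdE z2 - acdE z1| ≤ Real.exp q * |z2 - z1| := by
  have := (convex_Iic q).norm_image_sub_le_of_norm_hasDerivWithin_le (f := acdE) (f' := acdE1)
    (C := Real.exp q) (fun x _ => (acdE_hasDerivAt x).hasDerivWithinAt)
    (fun x hx => by
      rw [Real.norm_eq_abs, abs_of_nonneg (acdE1_nonneg x)]; exact acdE1_le h0 hx) h1 h2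
  simpa [Real.norm_eq_abs] using this

lemma acd_log_lip {p q ε : ℝ} (hε : 0 < ε) (hp : ε ≤ p) (hq : ε ≤ q) :
    |Real.log p - Real.log q| ≤ |p - q| / ε := by
  have key : ∀ p q : ℝ, ε ≤ p → ε ≤ q → Real.log p - Real.log q ≤ |p - q| / ε := by
    intro p q hp hq
    have p0 : 0 < p := by linarith
    have q0 : 0 < q := by linarith
    rw [← Real.log_div p0.ne' q0.ne']
    calc Real.log (p / q) ≤ p / q - 1 := Real.log_le_sub_one_of_pos (by positivity)
      _ = (p - q) / q := by field_simp
      _ ≤ |p - q| / q := by gcongr; exact le_abs_self _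
      _ ≤ |p - q| / ε := by gcongr
  rw [abs_le]
  constructor
  · have := key q p hq hp
    rw [abs_sub_comm] at this; linarith
  · exact key p q hp hq

/-- One-step change of variables inequality for Gaussian measures. -/
lemma acd_onestep {v : NNReal} (hv : v ≠ 0) {D : Set ℝ} (hD : MeasurableSet D) {d d' : ℝ → ℝ}
    (hd : ∀ z ∈ D, HasDerivAt d (d' z) z) (hinj : InjOn (fun z => z - d z) D)
    (hdm : Measurable d) (hdm' : Measurable d')
    {K : ℝ → ENNReal} (hK : Measurable K) :
    ∫⁻ z, ENNReal.ofReal (D.indicator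
      (fun z => Real.exp ((2 * z * d z - d z ^ 2) / (2 * v)) * |1 - d' z|) z) * K (z - d z)
      ∂(gaussianReal 0 v) ≤ ∫⁻ z, K z ∂(gaussianReal 0 v) := by
  have hv0 : (0:ℝ) < v := by positivity
  rw [gaussianReal_of_var_ne_zero _ hv,
    lintegral_withDensity_eq_lintegral_mul _ (measurable_gaussianPDF 0 v) hK,
    lintegral_withDensity_eq_lintegral_mul _ (measurable_gaussianPDF 0 v) (by
      refine Measurable.mul ?_ (by fun_prop)
      refine ENNReal.measurable_ofReal.comp ?_
      exact Measurable.indicator (by fun_prop) hD)]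
  calc _ = ∫⁻ z in D, ENNReal.ofReal |1 - d' z| *
        ((gaussianPDF 0 v * K) ((fun z => z - d z) z)) := by
        rw [← lintegral_indicator hD]
        apply lintegral_congr
        intro z
        by_cases hz : z ∈ D
        · simp only [Pi.mul_apply, indicator_of_mem hz, gaussianPDF]
          rw [← mul_assoc, ← mul_assoc, ← ENNReal.ofReal_mul (gaussianPDFReal_nonneg _ _ _),
            ← ENNReal.ofReal_mul (abs_nonneg _)]
          congr 2
          unfold gaussianPDFReal
          rw [mul_assoc, ← mul_assoc (Real.exp _), ← Real.exp_add]
          rw [show -(z - 0) ^ 2 / (2 * (v:ℝ)) + (2 * z * d z - d z ^ 2) / (2 * v)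
            = -(z - d z - 0) ^ 2 / (2 * v) by ring]
          ring
        · simp [indicator_of_notMem hz]
    _ = ∫⁻ z in Set.image (fun z => z - d z) D, (gaussianPDF 0 v * K) z :=
        (lintegral_image_eq_lintegral_abs_deriv_mul hD
          (fun z hz => ((hasDerivAt_id z).sub (hd z hz)).hasDerivWithinAt) hinj _).symm
    _ ≤ _ := setLIntegral_le_lintegral _ _

lemma acd_indep {Ω E : Type*} [MeasurableSpace Ω] [MeasurableSpace E] {P : Measure Ω}
    {ξ : ℕ → Ω → ℝ} (hξ : iIndepFun ξ P) (hm : ∀ i, Measurable (ξ i)) {Z : ℕ → Ω → E}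
    {step : E × ℝ → E} (hstep : Measurable step) {z0 : E} (h0 : ∀ ω, Z 0 ω = z0)
    (hs : ∀ k ω, Z (k + 1) ω = step (Z k ω, ξ k ω)) (k : ℕ) :
    Measurable (Z k) ∧ IndepFun (Z k) (ξ k) P := by
  have : ∃ g : ((i : Finset.range k) → ℝ) → E, Measurable g ∧
      Z k = fun ω => g (fun i => ξ i ω) := by
    induction k with
    | zero => exact ⟨fun _ => z0, measurable_const, funext h0⟩
    | succ k ih =>
      obtain ⟨g, hg, hZ⟩ := ih
      refine ⟨fun y => step (g (fun i => y ⟨i.1, by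
        have := Finset.mem_range.1 i.2; exact Finset.mem_range.2 (by omega)⟩),
        y ⟨k, by simp⟩), ?_, ?_⟩
      · apply hstep.comp
        apply Measurable.prodMk
        · apply hg.comp
          apply measurable_pi_lambda
          intro i
          exact measurable_pi_apply _
        · exact measurable_pi_apply _
      · funext ω
        rw [hs, hZ]
  obtain ⟨g, hg, hZ⟩ := this
  have hi := hξ.indepFun_finset (Finset.range k) {k} (by simp) hm
  constructor
  · rw [hZ]; exact hg.comp (measurable_pi_lambda _ fun i => hm i)
  · have h2 : Measurable (fun y : (({k} : Finset ℕ) → ℝ) => y ⟨k, by simp⟩) :=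
      measurable_pi_apply _
    have := hi.comp (φ := g) hg h2
    rw [hZ]; exact this

lemma acd_indep_lintegral {Ω E : Type*} [MeasurableSpace Ω] [MeasurableSpace E] {P : Measure Ω}
    [IsProbabilityMeasure P] {Z : Ω → E} {ξ : Ω → ℝ} (hZ : Measurable Z) (hξ : Measurable ξ)
    (hi : IndepFun Z ξ P) {F : E × ℝ → ENNReal} (hF : Measurable F) :
    ∫⁻ ω, F (Z ω, ξ ω) ∂P = ∫⁻ ω, ∫⁻ z, F (Z ω, z) ∂(P.map ξ) ∂P := by
  have h1 := (indepFun_iff_map_prod_eq_prod_map_map hZ.aemeasurable hξ.aemeasurable).1 hi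
  have : IsProbabilityMeasure (P.map ξ) := Measure.isProbabilityMeasure_map hξ.aemeasurable
  rw [← lintegral_map (f := F) hF (hZ.prodMk hξ), h1, lintegral_prod _ hF.aemeasurable,
    lintegral_map (hF.lintegral_prod_right') hZ]

end

section

def acdAn (h x a z : ℝ) : ℝ := a + h * (Real.exp x * acdE (z - h / 2))
def acdd (c h x a z : ℝ) : ℝ := 2 * Real.log (1 + c * acdAn h x a z) - 2 * Real.log (1 + c * a)
def acdd1 (c h x a z : ℝ) : ℝ :=
  2 * (c * (h * (Real.exp x * acdE1 (z - h / 2)))) / (1 + c * acdAn h x a z)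
def acdD (c h r ε x a : ℝ) : Set ℝ := {z | x < r ∧ x + z - h / 2 < r ∧ ε < 1 + c * acdAn h x a z}
open Classical in
def acdw (c h r ε x a z : ℝ) : ℝ :=
  if z ∈ acdD c h r ε x a then
    Real.exp ((2 * z * acdd c h x a z - acdd c h x a z ^ 2) / (2 * h)) * |1 - acdd1 c h x a z|
  else 0

def acdStep (c h r ε : ℝ) (s : (ℝ × ℝ × ℝ × ℝ × ℝ) × ℝ) : ℝ × ℝ × ℝ × ℝ × ℝ :=
  (s.1.1 + s.2 - h / 2, acdAn h s.1.1 s.1.2.1 s.2,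
    s.1.2.2.1 + h * Real.exp (s.1.1 - 2 * Real.log (1 + c * s.1.2.1)),
    s.1.2.2.2.1 * acdw c h r ε s.1.1 s.1.2.1 s.2,
    s.1.2.2.2.2 + h * Real.exp s.1.1)

def acdZ (c h r ε : ℝ) (ξ : ℕ → ℝ) : ℕ → ℝ × ℝ × ℝ × ℝ × ℝ
  | 0 => (0, 0, 0, 1, 0)
  | k + 1 => acdStep c h r ε (acdZ c h r ε ξ k, ξ k)

@[fun_prop] lemma acdE_measurable : Measurable acdE := acdE_continuous.measurable
@[fun_prop] lemma acdE1_measurable : Measurable acdE1 := acdE1_continuous.measurable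

lemma acdAn_measurable (h : ℝ) : Measurable (fun s : ℝ × ℝ × ℝ => acdAn h s.1 s.2.1 s.2.2) := by
  unfold acdAn; fun_prop

lemma acdw_measurable (c h r ε : ℝ) :
    Measurable (fun s : ℝ × ℝ × ℝ => acdw c h r ε s.1 s.2.1 s.2.2) := by
  have hA := acdAn_measurable h
  unfold acdw
  refine Measurable.ite ?_ ?_ measurable_const
  · unfold acdD
    have m1 : MeasurableSet {s : ℝ × ℝ × ℝ | s.1 < r} :=
      measurableSet_lt (by fun_prop) (by fun_prop)
    have m2 : MeasurableSet {s : ℝ × ℝ × ℝ | s.1 + s.2.2 - h / 2 < r} :=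
      measurableSet_lt (by fun_prop) (by fun_prop)
    have m3 : MeasurableSet {s : ℝ × ℝ × ℝ | ε < 1 + c * acdAn h s.1 s.2.1 s.2.2} :=
      measurableSet_lt (by fun_prop) (by fun_prop)
    exact m1.inter (m2.inter m3)
  · unfold acdd acdd1
    fun_prop

lemma acdStep_measurable (c h r ε : ℝ) : Measurable (acdStep c h r ε) := by
  unfold acdStep
  refine Measurable.prodMk (by fun_prop) (Measurable.prodMk ?_ (Measurable.prodMk (by fun_prop)
    (Measurable.prodMk ?_ (by fun_prop))))
  · exact (acdAn_measurable h).comp (g := fun s : ℝ × ℝ × ℝ => acdAn h s.1 s.2.1 s.2.2)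
      (f := fun s : (ℝ × ℝ × ℝ × ℝ × ℝ) × ℝ => (s.1.1, s.1.2.1, s.2)) (by fun_prop)
  · refine Measurable.mul (by fun_prop) ?_
    exact (acdw_measurable c h r ε).comp
      (g := fun s : ℝ × ℝ × ℝ => acdw c h r ε s.1 s.2.1 s.2.2)
      (f := fun s : (ℝ × ℝ × ℝ × ℝ × ℝ) × ℝ => (s.1.1, s.1.2.1, s.2)) (by fun_prop)

lemma acdw_nonneg (c h r ε x a z : ℝ) : 0 ≤ acdw c h r ε x a z := by
  unfold acdw; split_ifs <;> positivity

lemma acdZ_nonneg (c h r ε : ℝ) (ξ : ℕ → ℝ) (k : ℕ) : 0 ≤ (acdZ c h r ε ξ k).2.2.2.1 := by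
  induction k with
  | zero => simp [acdZ]
  | succ k ih => exact mul_nonneg ih (acdw_nonneg _ _ _ _ _ _ _)

lemma acd_inj {c h r ε x a : ℝ} (hh : 0 < h) (hε : 0 < ε) (hc : 4 * |c| * h * Real.exp r ≤ ε) :
    InjOn (fun z => z - acdd c h x a z) (acdD c h r ε x a) := by
  intro z1 h1 z2 h2 heq
  simp only at heq
  by_contra hne
  have hpos : 0 < |z2 - z1| := abs_pos.2 (sub_ne_zero.2 (Ne.symm hne))
  have hd : acdd c h x a z2 - acdd c h x a z1 = z2 - z1 := by linarith
  have hlip : |acdd c h x a z2 - acdd c h x a z1| ≤ 1 / 2 * |z2 - z1| := by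
    have e1 : acdd c h x a z2 - acdd c h x a z1 =
        2 * (Real.log (1 + c * acdAn h x a z2) - Real.log (1 + c * acdAn h x a z1)) := by
      unfold acdd; ring
    rw [e1, abs_mul, abs_two]
    have l1 := acd_log_lip hε h2.2.2.le h1.2.2.le
    have e2 : (1 + c * acdAn h x a z2) - (1 + c * acdAn h x a z1) =
        c * (h * (Real.exp x * (acdE (z2 - h / 2) - acdE (z1 - h / 2)))) := by
      unfold acdAn; ring
    rw [e2, abs_mul, abs_mul, abs_mul, abs_of_pos hh, abs_of_pos (Real.exp_pos x)] at l1
    have l2 := acdE_lip (q := r - x) (z1 := z1 - h / 2) (z2 := z2 - h / 2)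
      (by linarith [h1.1]) (by linarith [h1.2.1]) (by linarith [h2.2.1])
    rw [show z2 - h / 2 - (z1 - h / 2) = z2 - z1 by ring] at l2
    have l3 : |c| * (h * (Real.exp x * |acdE (z2 - h / 2) - acdE (z1 - h / 2)|)) / ε
        ≤ 1 / 4 * |z2 - z1| := by
      rw [div_le_iff₀ hε]
      calc _ ≤ |c| * (h * (Real.exp x * (Real.exp (r - x) * |z2 - z1|))) := by gcongr
        _ = (|c| * h * Real.exp r) * |z2 - z1| := by
            rw [← mul_assoc (Real.exp x), ← Real.exp_add]
            rw [show x + (r - x) = r by ring]; ring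
        _ ≤ (ε / 4) * |z2 - z1| := by gcongr; linarith
        _ = _ := by ring
    linarith
  rw [hd] at hlip
  linarith

lemma acdd_hasDerivAt {c h x a z : ℝ} (hp : 1 + c * acdAn h x a z ≠ 0) :
    HasDerivAt (acdd c h x a) (acdd1 c h x a z) z := by
  have h1 : HasDerivAt (fun z => acdE (z - h / 2)) (acdE1 (z - h / 2)) z := by
    simpa using (acdE_hasDerivAt (z - h / 2)).comp_sub_const z (h / 2)
  have h2 : HasDerivAt (fun z => 1 + c * acdAn h x a z)
      (c * (h * (Real.exp x * acdE1 (z - h / 2)))) z := by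
    unfold acdAn
    exact ((((h1.const_mul (Real.exp x)).const_mul h).const_add a).const_mul c).const_add 1
  have h3 := ((h2.log hp).const_mul 2).sub_const (2 * Real.log (1 + c * a))
  have e : acdd1 c h x a z = 2 * (c * (h * (Real.exp x * acdE1 (z - h / 2))) /
      (1 + c * acdAn h x a z)) := by
    unfold acdd1; rw [mul_div_assoc]
  rw [e]
  exact h3

lemma acd_chain {Ω : Type*} [MeasurableSpace Ω] {P : Measure Ω} [IsProbabilityMeasure P]
    {c h r ε : ℝ} (hh : 0 < h) (hε : 0 < ε) (hc : 4 * |c| * h * Real.exp r ≤ ε)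
    {ξ : ℕ → Ω → ℝ} (hξ : iIndepFun ξ P) (hm : ∀ i, Measurable (ξ i))
    (hlaw : ∀ i, P.map (ξ i) = gaussianReal 0 h.toNNReal) (k : ℕ) :
    ∀ (F : ℝ × ℝ → ENNReal), Measurable F →
    ∫⁻ ω, ENNReal.ofReal (acdZ c h r ε (fun i => ξ i ω) k).2.2.2.1 *
      F ((acdZ c h r ε (fun i => ξ i ω) k).1
          - 2 * Real.log (1 + c * (acdZ c h r ε (fun i => ξ i ω) k).2.1),
        (acdZ c h r ε (fun i => ξ i ω) k).2.2.1) ∂P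
    ≤ ∫⁻ ω, F ((acdZ c h r ε (fun i => ξ i ω) k).1,
        (acdZ c h r ε (fun i => ξ i ω) k).2.2.2.2) ∂P := by
  induction k with
  | zero => intro F hF; simp [acdZ]
  | succ k ih =>
    intro F hF
    have hv : h.toNNReal ≠ 0 := by simpa using hh
    have hvr : ((h.toNNReal : NNReal) : ℝ) = h := Real.coe_toNNReal h hh.le
    obtain ⟨hZm, hZi⟩ := acd_indep (Z := fun k ω => acdZ c h r ε (fun i => ξ i ω) k) hξ hm
      (acdStep_measurable c h r ε) (z0 := (0, 0, 0, 1, 0)) (fun ω => rfl) (fun k ω => rfl) k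
    have hS := acdStep_measurable c h r ε
    set F1 : ℝ × ℝ → ENNReal := fun y =>
      ∫⁻ z, F (y.1 + z - h / 2, y.2 + h * Real.exp y.1) ∂(gaussianReal 0 h.toNNReal) with hF1
    have hF1m : Measurable F1 := by
      apply Measurable.lintegral_prod_right'
        (f := fun q : (ℝ × ℝ) × ℝ => F (q.1.1 + q.2 - h / 2, q.1.2 + h * Real.exp q.1.1))
      exact hF.comp (by fun_prop)
    have hG : Measurable (fun s : ℝ × ℝ × ℝ × ℝ × ℝ => ENNReal.ofReal s.2.2.2.1 *
      F (s.1 - 2 * Real.log (1 + c * s.2.1), s.2.2.1)) := by fun_prop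
    have hG' : Measurable (fun s : ℝ × ℝ × ℝ × ℝ × ℝ => F (s.1, s.2.2.2.2)) := by fun_prop
    have hL := acd_indep_lintegral hZm (hm k) hZi (F := fun s =>
      ENNReal.ofReal (acdStep c h r ε s).2.2.2.1 * F ((acdStep c h r ε s).1
          - 2 * Real.log (1 + c * (acdStep c h r ε s).2.1), (acdStep c h r ε s).2.2.1))
      (hG.comp hS)
    have hR := acd_indep_lintegral hZm (hm k) hZi (F := fun s =>
      F ((acdStep c h r ε s).1, (acdStep c h r ε s).2.2.2.2))
      (hG'.comp hS)
    refine (le_of_eq hL).trans (le_trans ?_ (le_of_eq hR.symm))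
    rw [hlaw k]
    refine le_trans ?_ (ih F1 hF1m)
    apply lintegral_mono
    intro ω
    simp only
    have hW := acdZ_nonneg c h r ε (fun i => ξ i ω) k
    generalize acdZ c h r ε (fun i => ξ i ω) k = s at hW ⊢
    obtain ⟨x, a, p, W, q⟩ := s
    simp only [acdStep, hF1] at hW ⊢
    have hAn : Measurable (fun z => acdAn h x a z) := by unfold acdAn; fun_prop
    have m1 : MeasurableSet {z : ℝ | x < r} :=
      measurableSet_lt (by fun_prop) (by fun_prop)
    have m2 : MeasurableSet {z : ℝ | x + z - h / 2 < r} :=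
      measurableSet_lt (by fun_prop) (by fun_prop)
    have m3 : MeasurableSet {z : ℝ | ε < 1 + c * acdAn h x a z} :=
      measurableSet_lt (by fun_prop) (by fun_prop)
    have hone := acd_onestep hv (D := acdD c h r ε x a) (d := acdd c h x a)
      (d' := acdd1 c h x a)
      (m1.inter (m2.inter m3))
      (fun z hz => acdd_hasDerivAt (ne_of_gt (lt_trans hε hz.2.2)))
      (acd_inj hh hε hc)
      (by unfold acdd; fun_prop) (by unfold acdd1; fun_prop)
      (K := fun z => F (x - 2 * Real.log (1 + c * a) + z - h / 2,
        p + h * Real.exp (x - 2 * Real.log (1 + c * a)))) (by fun_prop)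
    refine le_trans (le_of_eq ?_) (mul_le_mul_right hone (ENNReal.ofReal W))
    rw [← lintegral_const_mul']
    swap; exact ENNReal.ofReal_ne_top
    apply lintegral_congr
    intro z
    rw [ENNReal.ofReal_mul hW, mul_assoc]
    congr 2
    · unfold acdw
      rw [hvr]
      by_cases hz : z ∈ acdD c h r ε x a
      · rw [if_pos hz, indicator_of_mem hz]
      · rw [if_neg hz, indicator_of_notMem hz]
    · congr 2
      unfold acdd; ring

end

section

lemma acd_mulb {a b p q : ℝ} (ha : |a| ≤ p) (hb : |b| ≤ q) : |a * b| ≤ p * q := by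
  rw [abs_mul]; exact mul_le_mul ha hb (abs_nonneg _) ((abs_nonneg _).trans ha)

lemma acd_log1 {x : ℝ} (hx : |x| ≤ 1 / 2) : |Real.log (1 + x) - x| ≤ 2 * x ^ 2 := by
  have h := Real.abs_log_sub_add_sum_range_le (x := -x) (by rw [abs_neg]; linarith) 1
  simp only [Finset.sum_range_one, abs_neg] at h
  have e : (-x) ^ (0 + 1) / ((0:ℕ) + 1 : ℝ) + Real.log (1 - -x) = Real.log (1 + x) - x := by
    rw [sub_neg_eq_add]; norm_num; ring
  rw [e] at h
  refine h.trans ?_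
  rw [div_le_iff₀ (by linarith), show (1 + 1) = 2 from rfl, sq_abs]
  nlinarith [sq_nonneg x]

lemma acd_alg {Y y h η Δ f g ρ ρ2 : ℝ} (hY : 1 ≤ Y) (hy : |y| ≤ Y) (hh : 0 < h) (hη : h ≤ η)
    (hΔ : |Δ| ≤ η) (h8 : 8 * Y * η ≤ 1) (hf : |f - 1| ≤ 2 * η) (hg : |2 * g - 1| ≤ 2 * η)
    (hρ : |ρ| ≤ 8 * Y ^ 2 * h ^ 2) (hρ2 : |ρ2| ≤ 18 * Y ^ 2 * h ^ 2) :
    |((Δ / h + 1 / 2) * (2 * (y * h * f + ρ)) - (2 * (y * h * f + ρ)) ^ 2 / (2 * h)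
      - 2 * y * h * g / (1 + y * h * f) + ρ2)
      - 2 * y * (Δ * f - y * h * f) / (1 + y * h * f)| ≤ 400 * Y ^ 3 * (h * η) := by
  have hη0 : 0 < η := by linarith
  have hη1 : 8 * η ≤ 1 := by nlinarith
  have hf2 : |f| ≤ 2 := by
    have := abs_le.1 hf; rw [abs_le]; constructor <;> linarith
  have hψ : |y * h * f| ≤ 2 * Y * h := by
    have := acd_mulb (acd_mulb hy (abs_of_pos hh).le) hf2
    linarith
  have hYh : 8 * Y * h ≤ 1 := by nlinarith
  set ψ := y * h * f with hψd
  have hψ1 : 1 / 2 ≤ 1 + ψ := by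
    have := abs_le.1 hψ; linarith
  have hinv : |1 / (1 + ψ)| ≤ 2 := by
    rw [abs_of_pos (by positivity), div_le_iff₀ (by linarith)]; linarith
  have hg2 : |2 * g| ≤ 2 := by
    have := abs_le.1 hg; rw [abs_le]; constructor <;> linarith
  have hfg : |f - 2 * g| ≤ 4 * η := by
    have h1 := abs_le.1 hg; have h2 := abs_le.1 hf; rw [abs_le]; constructor <;> linarith
  have hρh : |ρ / h| ≤ 8 * Y ^ 2 * h := by
    rw [abs_div, abs_of_pos hh, div_le_iff₀ hh]; nlinarith
  have hf1 : |1 - f| ≤ 2 * η := by rw [abs_sub_comm]; exact hf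
  have e : ((Δ / h + 1 / 2) * (2 * (ψ + ρ)) - (2 * (ψ + ρ)) ^ 2 / (2 * h)
      - 2 * y * h * g / (1 + ψ) + ρ2) - 2 * y * (Δ * f - ψ) / (1 + ψ)
      = 2 * (Δ * (ρ / h)) + y * (h * (f - 2 * g)) + y * (h * (2 * g)) * (ψ * (1 / (1 + ψ)))
        + ρ + 2 * (y * ψ * (1 - f)) - 4 * (ψ * (ρ / h)) - 2 * (ρ * (ρ / h)) + ρ2
        + 2 * (y * (Δ * f - ψ) * (ψ * (1 / (1 + ψ)))) := by
    have hne : 1 + ψ ≠ 0 := by linarith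
    have hhne : h ≠ 0 := hh.ne'
    have a1 : ∀ w : ℝ, w / (1 + ψ) = w - w * (ψ * (1 / (1 + ψ))) := by
      intro w; field_simp; ring
    rw [a1 (2 * y * h * g), a1 (2 * y * (Δ * f - ψ))]
    generalize ψ * (1 / (1 + ψ)) = R
    rw [hψd]
    field_simp
    ring
  rw [e]
  have hψi := acd_mulb hψ hinv
  have hh' : |h| ≤ h := (abs_of_pos hh).le
  have T1 := acd_mulb hΔ hρh
  have T2 := acd_mulb hy (acd_mulb hh' hfg)
  have T3 := acd_mulb (acd_mulb hy (acd_mulb hh' hg2)) hψi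
  have T5 := acd_mulb (acd_mulb hy hψ) hf1
  have T6 := acd_mulb hψ hρh
  have T7 := acd_mulb hρ hρh
  have hDf : |Δ * f - ψ| ≤ 4 * Y * η := by
    have h1 := acd_mulb hΔ hf2
    have h2 : |Δ * f - ψ| ≤ |Δ * f| + |ψ| := abs_sub _ _
    have h3 : 2 * Y * h ≤ 2 * Y * η := by gcongr
    have h4 : 1 * η ≤ Y * η := by gcongr
    linarith
  have T9 := acd_mulb (acd_mulb hy hDf) hψi
  have hY0 : 0 < Y := by linarith
  have hY2 : Y ≤ Y ^ 3 := le_self_pow₀ hY (by norm_num)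
  have hY3 : Y ^ 2 ≤ Y ^ 3 := pow_le_pow_right₀ hY (by norm_num)
  have hhη : h ^ 2 ≤ h * η := by rw [sq]; gcongr
  have hp : 0 < h * η := by positivity
  have v1 : Y * (h * η) ≤ Y ^ 3 * (h * η) := by gcongr
  have v2 : Y ^ 2 * (h * η) ≤ Y ^ 3 * (h * η) := by gcongr
  have hYY : Y ^ 2 * h ^ 2 ≤ Y ^ 3 * (h * η) := by gcongr
  have hYYY : Y ^ 3 * h ^ 2 ≤ Y ^ 3 * (h * η) := by gcongr
  have u1 : η * (8 * Y ^ 2 * h) ≤ 8 * (Y ^ 3 * (h * η)) := by linarith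
  have u2 : Y * (h * (4 * η)) ≤ 4 * (Y ^ 3 * (h * η)) := by linarith
  have u3 : Y * (h * 2) * (2 * Y * h * 2) ≤ 8 * (Y ^ 3 * (h * η)) := by linarith
  have u5 : Y * (2 * Y * h) * (2 * η) ≤ 4 * (Y ^ 3 * (h * η)) := by linarith
  have u6 : 2 * Y * h * (8 * Y ^ 2 * h) ≤ 16 * (Y ^ 3 * (h * η)) := by linarith
  have u7 : 8 * Y ^ 2 * h ^ 2 * (8 * Y ^ 2 * h) ≤ 8 * (Y ^ 3 * (h * η)) := by
    calc 8 * Y ^ 2 * h ^ 2 * (8 * Y ^ 2 * h) = 8 * (Y ^ 3 * h ^ 2) * (8 * Y * h) := by ring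
      _ ≤ 8 * (Y ^ 3 * h ^ 2) * 1 := by gcongr
      _ ≤ _ := by linarith
  have u9 : Y * (4 * Y * η) * (2 * Y * h * 2) ≤ 16 * (Y ^ 3 * (h * η)) := by
    apply le_of_eq; ring
  have u4 : 8 * Y ^ 2 * h ^ 2 ≤ 8 * (Y ^ 3 * (h * η)) := by linarith
  have u8 : 18 * Y ^ 2 * h ^ 2 ≤ 18 * (Y ^ 3 * (h * η)) := by linarith
  replace T1 := abs_le.1 (T1.trans u1)
  replace T2 := abs_le.1 (T2.trans u2)
  replace T3 := abs_le.1 (T3.trans u3)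
  replace T4 := abs_le.1 (hρ.trans u4)
  replace T5 := abs_le.1 (T5.trans u5)
  replace T6 := abs_le.1 (T6.trans u6)
  replace T7 := abs_le.1 (T7.trans u7)
  replace T8 := abs_le.1 (hρ2.trans u8)
  replace T9 := abs_le.1 (T9.trans u9)
  have hQ : 0 < Y ^ 3 * (h * η) := by positivity
  rw [mul_assoc 400]
  clear_value ψ
  clear u1 u2 u3 u4 u5 u6 u7 u8 u9 hYY hYYY v1 v2 hp hhη hY3 hY2 hDf hψi e hf1 hρh hfg hg2 hinv hψ1 hYh hψ hf2 hη1 hρ hρ2 hf hg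
  generalize Y ^ 3 * (h * η) = Q at *
  generalize Δ * (ρ / h) = q1 at *
  generalize y * (h * (f - 2 * g)) = q2 at *
  generalize y * (h * (2 * g)) * (ψ * (1 / (1 + ψ))) = q3 at *
  generalize y * ψ * (1 - f) = q5 at *
  generalize ψ * (ρ / h) = q6 at *
  generalize ρ * (ρ / h) = q7 at *
  generalize y * (Δ * f - ψ) * (ψ * (1 / (1 + ψ))) = q9 at *
  obtain ⟨a1, b1⟩ := T1
  obtain ⟨a2, b2⟩ := T2
  obtain ⟨a3, b3⟩ := T3
  obtain ⟨a4, b4⟩ := T4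
  obtain ⟨a5, b5⟩ := T5
  obtain ⟨a6, b6⟩ := T6
  obtain ⟨a7, b7⟩ := T7
  obtain ⟨a8, b8⟩ := T8
  obtain ⟨a9, b9⟩ := T9
  rw [abs_le]
  constructor <;> linarith only [a1, a2, a3, a4, a5, a6, a7, a8, a9, b1, b2, b3, b4, b5, b6, b7, b8, b9, hQ]

/-- Local estimate of the logarithm of the one-step weight. -/
lemma acd_logw {K c h η x Δ a r ε : ℝ} (hK : 1 ≤ K) (hc : |c| ≤ K) (hh : 0 < h) (hη : h ≤ η)
    (hΔ : |Δ| ≤ η) (h8 : 8 * K ^ 3 * η ≤ 1) (hx : Real.exp x ≤ K) (hs : 1 / K ≤ 1 + c * a)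
    (hD : Δ + h / 2 ∈ acdD c h r ε x a) :
    0 < acdw c h r ε x a (Δ + h / 2) ∧
    |Real.log (acdw c h r ε x a (Δ + h / 2)) -
      (2 * c * Real.exp (x + Δ) / (1 + c * acdAn h x a (Δ + h / 2))
        - 2 * c * Real.exp x / (1 + c * a))| ≤ 400 * (K ^ 3) ^ 3 * (h * η) := by
  have hK3 : 1 ≤ K ^ 3 := one_le_pow₀ hK
  have hη0 : 0 < η := by linarith
  have hη1 : 8 * η ≤ 1 := by nlinarith
  have hK0 : 0 < K := by linarith
  have hs0 : 0 < 1 + c * a := lt_of_lt_of_le (by positivity) hs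
  set s := 1 + c * a with hsd
  set f := acdE Δ with hfd
  set g := acdE1 Δ with hgd
  set y := c * Real.exp x / s with hyd
  have hΔ1 : |Δ| ≤ 1 := by linarith
  have hf : |f - 1| ≤ 2 * η := (acdE_near hΔ1).trans (by linarith)
  have hg : |2 * g - 1| ≤ 2 * η := by
    have := acdE1_near hΔ1
    rw [show 2 * g - 1 = 2 * (g - 1 / 2) by ring, abs_mul, abs_two]; linarith
  have hsinv : |1 / s| ≤ K := by
    rw [abs_of_pos (by positivity), div_le_iff₀ hs0]
    rw [div_le_iff₀ hK0] at hs; linarith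
  have hy : |y| ≤ K ^ 3 := by
    have := acd_mulb (acd_mulb hc (abs_of_pos (Real.exp_pos x)|>.le.trans hx)) hsinv
    rw [hyd, div_eq_mul_one_div]; linarith
  have hf2 : |f| ≤ 2 := by
    have := abs_le.1 hf; rw [abs_le]; constructor <;> linarith
  have hYh : 8 * K ^ 3 * h ≤ 1 := le_trans (by gcongr) h8
  have hψ : |y * h * f| ≤ 2 * K ^ 3 * h := by
    have := acd_mulb (acd_mulb hy (abs_of_pos hh).le) hf2
    linarith
  set ψ := y * h * f with hψd
  have hψ1 : 1 / 2 ≤ 1 + ψ := by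
    have := abs_le.1 hψ; linarith
  have hAn : 1 + c * acdAn h x a (Δ + h / 2) = s * (1 + ψ) := by
    rw [acdAn, show Δ + h / 2 - h / 2 = Δ by ring, hψd, hyd, hsd]
    rw [hsd] at hs0
    field_simp
    ring
  have hd : acdd c h x a (Δ + h / 2) = 2 * (ψ + (Real.log (1 + ψ) - ψ)) := by
    rw [acdd, hAn, Real.log_mul hs0.ne' (by linarith)]
    ring
  set ρ := Real.log (1 + ψ) - ψ with hρd
  have hd1 : acdd1 c h x a (Δ + h / 2) = 2 * y * h * g / (1 + ψ) := by
    rw [acdd1, hAn, show Δ + h / 2 - h / 2 = Δ by ring, hyd]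
    have : 1 + ψ ≠ 0 := by linarith
    field_simp
    try ring
  have hρ : |ρ| ≤ 8 * (K ^ 3) ^ 2 * h ^ 2 := by
    have h1 := acd_log1 (x := ψ) (by linarith)
    have h2 : ψ ^ 2 ≤ (2 * K ^ 3 * h) ^ 2 := by
      rw [← sq_abs]; gcongr
    refine h1.trans ?_
    nlinarith
  set d1 := 2 * y * h * g / (1 + ψ) with hd1d
  have hd1b : |d1| ≤ 3 * K ^ 3 * h := by
    have hg2 : |2 * g| ≤ 3 / 2 := by
      have := abs_le.1 hg; rw [abs_le]; constructor <;> linarith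
    have hinv : |1 / (1 + ψ)| ≤ 2 := by
      rw [abs_of_pos (by positivity), div_le_iff₀ (by linarith)]; linarith
    have := acd_mulb (acd_mulb (acd_mulb hy (abs_of_pos hh).le) hg2) hinv
    rw [show d1 = y * h * (2 * g) * (1 / (1 + ψ)) by rw [hd1d]; ring]
    linarith
  have hd1h : |d1| ≤ 1 / 2 := by linarith
  have hpos : 0 < 1 - d1 := by have := abs_le.1 hd1h; linarith
  set ρ2 := Real.log (1 - d1) + d1 with hρ2d
  have hρ2 : |ρ2| ≤ 18 * (K ^ 3) ^ 2 * h ^ 2 := by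
    have h1 := acd_log1 (x := -d1) (by rw [abs_neg]; linarith)
    rw [show Real.log (1 + -d1) - -d1 = ρ2 by rw [hρ2d]; ring_nf] at h1
    have h2 : (-d1) ^ 2 ≤ (3 * K ^ 3 * h) ^ 2 := by
      rw [← sq_abs, abs_neg]; gcongr
    refine h1.trans ?_
    nlinarith
  have hw : acdw c h r ε x a (Δ + h / 2) =
      Real.exp ((2 * (Δ + h / 2) * (2 * (ψ + ρ)) - (2 * (ψ + ρ)) ^ 2) / (2 * h)) * (1 - d1) := by
    rw [acdw, if_pos hD, hd, hd1, abs_of_pos hpos]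
  rw [hw]
  refine ⟨by positivity, ?_⟩
  rw [Real.log_mul (Real.exp_pos _).ne' hpos.ne', Real.log_exp, hAn]
  have hfin := acd_alg hK3 hy hh hη hΔ h8 hf hg hρ hρ2
  rw [← hψd] at hfin
  convert hfin using 2
  have hex : Real.exp (x + Δ) = Real.exp x * (1 + Δ * f) := by
    rw [Real.exp_add, hfd, acdE_mul]; ring
  have t1 : 2 * c * Real.exp (x + Δ) / (s * (1 + ψ)) - 2 * c * Real.exp x / s
      = 2 * y * (Δ * f - ψ) / (1 + ψ) := by
    rw [hex, hyd]
    have : 1 + ψ ≠ 0 := by linarith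
    field_simp
    ring
  rw [t1]
  have t2 : (2 * (Δ + h / 2) * (2 * (ψ + ρ)) - (2 * (ψ + ρ)) ^ 2) / (2 * h)
     = (Δ / h + 1 / 2) * (2 * (ψ + ρ)) - (2 * (ψ + ρ)) ^ 2 / (2 * h) := by
    field_simp
  rw [t2, show Real.log (1 - d1) = ρ2 - d1 by rw [hρ2d]; ring]
  rw [hd1d]; ring

end

section

lemma acd_tends {u : ℕ → ℝ} {l C η0 : ℝ} (hη0 : 0 < η0)
    (h : ∀ η, 0 < η → η ≤ η0 → ∀ᶠ n in Filter.atTop, |u n - l| ≤ C * η) :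
    Filter.Tendsto u Filter.atTop (nhds l) := by
  rw [Metric.tendsto_nhds]
  intro e he
  have hη : 0 < min η0 (e / (2 * (|C| + 1))) := by positivity
  filter_upwards [h _ hη (min_le_left _ _)] with n hn
  rw [Real.dist_eq]
  calc |u n - l| ≤ C * min η0 (e / (2 * (|C| + 1))) := hn
    _ ≤ (|C| + 1) * (e / (2 * (|C| + 1))) := by
        apply mul_le_mul _ (min_le_right _ _) hη.le (by positivity)
        linarith [le_abs_self C]
    _ = e / 2 := by field_simp
    _ < e := by linarith

def acdA (β : ℝ → ℝ) (u : ℝ) : ℝ := ∫ s in (0:ℝ)..u, Real.exp (β s)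

def acdxi (β : ℝ → ℝ) (h : ℝ) (i : ℕ) : ℝ := β ((i + 1 : ℕ) * h) - β (i * h) + h / 2

lemma acdA_inc {β : ℝ → ℝ} (hβ : Continuous β) {K η h : ℝ} {u : ℝ} (hh : 0 < h)
    (hη1 : η ≤ 1) (hK : Real.exp (β u) ≤ K)
    (hosc : ∀ s ∈ Icc u (u + h), |β s - β u| ≤ η) :
    |(acdA β (u + h) - acdA β u) - h * Real.exp (β u)| ≤ h * (2 * K * η) := by
  have hc : Continuous fun s => Real.exp (β s) := by fun_prop
  have e : (acdA β (u + h) - acdA β u) - h * Real.exp (β u)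
      = ∫ s in u..(u + h), (Real.exp (β s) - Real.exp (β u)) := by
    rw [intervalIntegral.integral_sub (hc.intervalIntegrable _ _) intervalIntegrable_const]
    unfold acdA
    rw [intervalIntegral.integral_interval_sub_left (hc.intervalIntegrable _ _)
      (hc.intervalIntegrable _ _)]
    simp
  rw [e]
  have := intervalIntegral.norm_integral_le_of_norm_le_const (a := u) (b := u + h)
    (f := fun s => Real.exp (β s) - Real.exp (β u)) (C := 2 * K * η) (by
      intro s hs
      rw [uIoc_of_le (by linarith)] at hs
      have ho := hosc s ⟨hs.1.le, hs.2⟩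
      rw [show Real.exp (β s) - Real.exp (β u)
        = Real.exp (β u) * (Real.exp (β s - β u) - 1) by
          rw [mul_sub, ← Real.exp_add]; ring_nf]
      have h1 := Real.abs_exp_sub_one_le (ho.trans hη1)
      rw [Real.norm_eq_abs]
      have := acd_mulb ((abs_of_pos (Real.exp_pos (β u))).le.trans hK)
        (h1.trans (by linarith : _ ≤ 2 * η))
      linarith)
  rw [Real.norm_eq_abs] at this
  rw [show u + h - u = h by ring, abs_of_pos hh] at this
  linarith

lemma acdZ_x {β : ℝ → ℝ} (h0 : β 0 = 0) (c h r ε : ℝ) (k : ℕ) :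
    (acdZ c h r ε (acdxi β h) k).1 = β (k * h) := by
  induction k with
  | zero => simp [acdZ, h0]
  | succ k ih =>
    simp only [acdZ, acdStep]
    rw [ih, acdxi]; ring

lemma acd_osc {β : ℝ → ℝ} {t η h : ℝ} {N : ℕ} (hh : 0 < h) (hN : N * h = t)
    (hosc : ∀ s ∈ Icc 0 t, ∀ s' ∈ Icc 0 t, |s - s'| ≤ h → |β s - β s'| ≤ η)
    {k : ℕ} (hk : k < N) : ((k:ℝ) * h ∈ Icc 0 t ∧ (k:ℝ) * h + h ∈ Icc 0 t) ∧
     ∀ s ∈ Icc ((k:ℝ) * h) (k * h + h), |β s - β (k * h)| ≤ η := by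
  have h1 : (k:ℝ) + 1 ≤ N := by exact_mod_cast hk
  have h2 : (k:ℝ) * h + h ≤ t := by rw [← hN]; nlinarith
  have h3 : 0 ≤ (k:ℝ) * h := by positivity
  refine ⟨⟨⟨h3, by linarith⟩, ⟨by linarith, h2⟩⟩, fun s hs => ?_⟩
  apply hosc s ⟨by linarith [hs.1], by linarith [hs.2]⟩ _ ⟨h3, by linarith⟩
  rw [abs_of_nonneg (by linarith [hs.1])]; linarith [hs.2]

lemma acdZ_q {β : ℝ → ℝ} (hβ : Continuous β) (h0 : β 0 = 0) {c h r ε K η t : ℝ} {N : ℕ}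
    (hh : 0 < h) (hN : N * h = t) (hη1 : η ≤ 1)
    (hK : ∀ s ∈ Icc 0 t, Real.exp (β s) ≤ K)
    (hosc : ∀ s ∈ Icc 0 t, ∀ s' ∈ Icc 0 t, |s - s'| ≤ h → |β s - β s'| ≤ η) :
    ∀ k ≤ N, |(acdZ c h r ε (acdxi β h) k).2.2.2.2 - acdA β (k * h)| ≤ k * h * (2 * K * η) := by
  intro k
  induction k with
  | zero => intro _; simp [acdZ, acdA]
  | succ k ih =>
    intro hk
    have ih := ih (by omega)
    obtain ⟨⟨hm, -⟩, ho⟩ := acd_osc hh hN hosc (show k < N by omega)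
    have hi := acdA_inc hβ hh hη1 (hK _ hm) ho
    simp only [acdZ, acdStep]
    rw [acdZ_x h0]
    push_cast
    rw [show ((k:ℝ) + 1) * h = k * h + h by ring]
    rw [abs_le] at *
    constructor <;> linarith [ih.1, ih.2, hi.1, hi.2]

lemma acdZ_all {β : ℝ → ℝ} (hβ : Continuous β) (h0 : β 0 = 0) {c h r ε K η t : ℝ} {N : ℕ}
    (hh : 0 < h) (hN : N * h = t) (hK1 : 1 ≤ K) (hcK : |c| ≤ K)
    (hK : ∀ s ∈ Icc 0 t, Real.exp (β s) ≤ K) (hS : ∀ s ∈ Icc 0 t, 2 / K ≤ 1 + c * acdA β s)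
    (hη : h ≤ η) (hη8 : 8 * K ^ 3 * η ≤ 1) (hη4 : 4 * K ^ 3 * t * η ≤ 1)
    (hr : Real.log K < r) (hε : ε < 1 / K)
    (hosc : ∀ s ∈ Icc 0 t, ∀ s' ∈ Icc 0 t, |s - s'| ≤ h → |β s - β s'| ≤ η) :
    ∀ k ≤ N, |(acdZ c h r ε (acdxi β h) k).2.1 - acdA β (k * h)| ≤ k * h * (4 * K * η) ∧
      |(acdZ c h r ε (acdxi β h) k).2.2.1 - acdA β (k * h) / (1 + c * acdA β (k * h))|
        ≤ k * h * ((K ^ 6 * (8 * t + 2) + 2 * K ^ 3) * η) ∧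
      (0 < (acdZ c h r ε (acdxi β h) k).2.2.2.1 ∧
      |Real.log (acdZ c h r ε (acdxi β h) k).2.2.2.1 -
        (2 * c * Real.exp (β (k * h)) / (1 + c * (acdZ c h r ε (acdxi β h) k).2.1) - 2 * c)|
        ≤ k * h * (400 * (K ^ 3) ^ 3 * η)) := by
  have hη0 : 0 < η := by linarith
  have hK0 : 0 < K := by linarith
  have hη1 : 8 * η ≤ 1 := by nlinarith [one_le_pow₀ hK1 (n := 3)]
  have ht0 : 0 ≤ t := by rw [← hN]; positivity
  -- closeness consequences
  have close : ∀ k : ℕ, k ≤ N → ∀ a : ℝ, |a - acdA β (k * h)| ≤ k * h * (4 * K * η) →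
      |(1 + c * a) - (1 + c * acdA β (k * h))| ≤ 4 * K ^ 2 * t * η ∧ 1 / K ≤ 1 + c * a ∧
      (k:ℝ) * h ∈ Icc 0 t := by
    intro k hk a ha
    have hkt : (k:ℝ) * h ≤ t := by
      rw [← hN]; gcongr
    have hmem : (k:ℝ) * h ∈ Icc 0 t := ⟨by positivity, hkt⟩
    have h1 : |(1 + c * a) - (1 + c * acdA β (k * h))| ≤ 4 * K ^ 2 * t * η := by
      rw [show (1 + c * a) - (1 + c * acdA β (k * h)) = c * (a - acdA β (k * h)) by ring]
      refine (acd_mulb hcK ha).trans ?_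
      calc K * (k * h * (4 * K * η)) ≤ K * (t * (4 * K * η)) := by gcongr
        _ = _ := by ring
    refine ⟨h1, ?_, hmem⟩
    have h2 := hS _ hmem
    have h3 : 4 * K ^ 2 * t * η ≤ 1 / K := by
      rw [le_div_iff₀ hK0]; linarith
    have h4 : 2 / K = 1 / K + 1 / K := by ring
    have := (abs_le.1 h1).1
    linarith
  intro k
  induction k with
  | zero => intro _; simp [acdZ, acdA, h0]
  | succ k ih =>
    intro hk
    obtain ⟨ia, ip, iW0, iW⟩ := ih (by omega)
    obtain ⟨⟨hm, hm'⟩, ho⟩ := acd_osc hh hN hosc (show k < N by omega)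
    have hi := acdA_inc hβ hh (by linarith) (hK _ hm) ho
    obtain ⟨cl1, cl2, -⟩ := close k (by omega) _ ia
    have hx := acdZ_x h0 c h r ε k
    have hz : acdxi β h k = (β (k * h + h) - β (k * h)) + h / 2 := by
      rw [acdxi]; push_cast; rw [show ((k:ℝ) + 1) * h = k * h + h by ring]
    have hΔ : |β (k * h + h) - β (k * h)| ≤ η := ho _ ⟨by linarith, le_rfl⟩
    have hcast : ((k + 1 : ℕ) : ℝ) * h = k * h + h := by push_cast; ring
    have ja : |(acdZ c h r ε (acdxi β h) (k + 1)).2.1 - acdA β ((k + 1 : ℕ) * h)|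
        ≤ (k + 1 : ℕ) * h * (4 * K * η) := by
      simp only [acdZ, acdStep, acdAn]
      rw [hcast, hx, hz, add_sub_cancel_right]
      have hE := acdE_near (hΔ.trans (by linarith))
      have h1 := acd_mulb ((abs_of_pos (Real.exp_pos (β (k * h)))).le.trans (hK _ hm))
        (hE.trans (by linarith : _ ≤ 2 * η))
      have h2 := acd_mulb (abs_of_pos hh).le h1
      generalize acdE (β (↑k * h + h) - β (↑k * h)) = E at *
      have h3 : h * (Real.exp (β (k * h)) * (E - 1))
        = h * (Real.exp (β (k * h)) * E) - h * Real.exp (β (k * h)) := by ring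
      rw [h3] at h2
      generalize h * (Real.exp (β (k * h)) * E) = Q at *
      rw [abs_le] at ia hi h2 ⊢
      constructor <;> linarith [ia.1, ia.2, hi.1, hi.2, h2.1, h2.2]
    obtain ⟨dl1, dl2, -⟩ := close (k + 1) hk _ ja
    refine ⟨ja, ?_, ?_⟩
    · simp only [acdZ, acdStep]
      rw [hx]
      generalize (acdZ c h r ε (acdxi β h) k).2.2.1 = p at *
      generalize (acdZ c h r ε (acdxi β h) k).2.1 = a at *
      have hs0 : 0 < 1 + c * a := lt_of_lt_of_le (by positivity) cl2
      have hS0 := hS _ hm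
      have hS1 := hS _ hm'
      rw [hcast]
      have hexp : Real.exp (β (k * h) - 2 * Real.log (1 + c * a))
          = Real.exp (β (k * h)) * (1 / (1 + c * a)) * (1 / (1 + c * a)) := by
        rw [sub_eq_add_neg, Real.exp_add, two_mul, neg_add, Real.exp_add, Real.exp_neg,
          Real.exp_log hs0]
        ring
      rw [hexp]
      have hEK := hK _ hm
      have hEp := Real.exp_pos (β (k * h))
      generalize Real.exp (β (k * h)) = X at *
      have hdA : |acdA β (k * h + h) - acdA β (k * h)| ≤ 2 * K * h := by
        have h1 : h * X ≤ h * K := by gcongr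
        have h2 : h * (2 * K * η) ≤ h * K := by
          have : h * (2 * K * η) = h * K * (2 * η) := by ring
          rw [this]
          have h3 : 0 < h * K := by positivity
          nlinarith
        have h4 : 0 < h * X := by positivity
        rw [abs_le] at hi ⊢
        constructor <;> linarith [hi.1, hi.2]
      generalize acdA β (k * h + h) = A1 at *
      generalize acdA β (k * h) = A0 at *
      have bnd : ∀ s : ℝ, 1 / K ≤ s → |1 / s| ≤ K := by
        intro s hs
        have hs0 : 0 < s := lt_of_lt_of_le (by positivity) hs
        rw [abs_of_pos (by positivity), div_le_iff₀ hs0]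
        rw [div_le_iff₀ hK0] at hs; linarith
      have h2K : 1 / K ≤ 2 / K := by gcongr; norm_num
      have hS0p : 0 < 1 + c * A0 := lt_of_lt_of_le (by positivity) hS0
      have hS1p : 0 < 1 + c * A1 := lt_of_lt_of_le (by positivity) hS1
      have b0 := bnd _ cl2
      have b1 := bnd _ (h2K.trans hS0)
      have b2 := bnd _ (h2K.trans hS1)
      have d2 : |(1 + c * a) - (1 + c * A1)| ≤ (4 * K ^ 2 * t + 2 * K ^ 2) * η := by
        have h1 := acd_mulb hcK hdA
        have h2 : K * (2 * K * h) ≤ K * (2 * K * η) := by gcongr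
        rw [abs_le] at h1 cl1 ⊢
        constructor <;> linarith [h1.1, h1.2, cl1.1, cl1.2]
      have key : X * (1 / (1 + c * a)) * (1 / (1 + c * a)) * h - (A1 / (1 + c * A1)
          - A0 / (1 + c * A0)) =
          h * (X * ((1 / (1 + c * a)) * (((1 / (1 + c * a)) * (1 / (1 + c * A0))) *
            -((1 + c * a) - (1 + c * A0)))
          + (1 / (1 + c * A0)) * (((1 / (1 + c * a)) * (1 / (1 + c * A1))) *
            -((1 + c * a) - (1 + c * A1)))))
          - ((A1 - A0) - h * X) * ((1 / (1 + c * A0)) * (1 / (1 + c * A1))) := by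
        field_simp
        ring
      have n1 := acd_mulb b0 (acd_mulb (acd_mulb b0 b1) ((abs_neg _).le.trans cl1))
      have n2 := acd_mulb b1 (acd_mulb (acd_mulb b0 b2) ((abs_neg _).le.trans d2))
      have n3 := acd_mulb (abs_of_pos hh).le (acd_mulb ((abs_of_pos hEp).le.trans hEK)
        ((abs_add_le _ _).trans (add_le_add n1 n2)))
      have n4 := acd_mulb hi (acd_mulb b1 b2)
      have n5 := (abs_sub _ _).trans (add_le_add n3 n4)
      rw [← key] at n5
      have n6 : h * (K * (K * (K * K * (4 * K ^ 2 * t * η)) +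
          K * (K * K * ((4 * K ^ 2 * t + 2 * K ^ 2) * η)))) + h * (2 * K * η) * (K * K)
          = h * ((K ^ 6 * (8 * t + 2) + 2 * K ^ 3) * η) := by ring
      rw [n6] at n5
      have n7 : p + h * (X * (1 / (1 + c * a)) * (1 / (1 + c * a))) - A1 / (1 + c * A1)
          = (X * (1 / (1 + c * a)) * (1 / (1 + c * a)) * h - (A1 / (1 + c * A1)
            - A0 / (1 + c * A0))) + (p - A0 / (1 + c * A0)) := by ring
      rw [n7]
      refine (abs_add_le _ _).trans ((add_le_add n5 ip).trans (le_of_eq ?_))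
      ring
    · have hD : (β (k * h + h) - β (k * h)) + h / 2 ∈
          acdD c h r ε (β (k * h)) (acdZ c h r ε (acdxi β h) k).2.1 := by
        have lg : ∀ s ∈ Icc 0 t, β s < r := by
          intro s hs
          refine lt_of_le_of_lt ?_ hr
          rw [Real.le_log_iff_exp_le hK0]; exact hK s hs
        refine ⟨lg _ hm, ?_, ?_⟩
        · have := lg _ hm'; linarith
        · refine lt_of_lt_of_le hε ?_
          have := dl2
          simp only [acdZ, acdStep] at this
          rw [hx, hz] at this
          exact this
      obtain ⟨w0, wl⟩ := acd_logw hK1 hcK hh hη hΔ hη8 (hK _ hm) cl2 hD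
      have eW : (acdZ c h r ε (acdxi β h) (k + 1)).2.2.2.1 =
          (acdZ c h r ε (acdxi β h) k).2.2.2.1 * acdw c h r ε (β (k * h))
            (acdZ c h r ε (acdxi β h) k).2.1 ((β (k * h + h) - β (k * h)) + h / 2) := by
        simp only [acdZ, acdStep]
        rw [hx, hz]
      have eA : (acdZ c h r ε (acdxi β h) (k + 1)).2.1 =
          acdAn h (β (k * h)) (acdZ c h r ε (acdxi β h) k).2.1
            ((β (k * h + h) - β (k * h)) + h / 2) := by
        simp only [acdZ, acdStep]
        rw [hx, hz]
      rw [eW]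
      refine ⟨mul_pos iW0 w0, ?_⟩
      rw [Real.log_mul iW0.ne' w0.ne', eA, hcast]
      rw [show β (k * h) + (β (k * h + h) - β (k * h)) = β (k * h + h) by ring] at wl
      rw [abs_le] at iW wl ⊢
      constructor <;> linarith [iW.1, iW.2, wl.1, wl.2]

def acdr (n : ℕ) : ℝ := Real.log (n + 1 : ℝ) / 2
def acdeps (c t : ℝ) (n : ℕ) : ℝ := (4 * |c| * t + 1) / Real.exp (acdr n)

def acdZn (c t : ℝ) (ξ : ℕ → ℝ) (n : ℕ) : ℝ × ℝ × ℝ × ℝ × ℝ :=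
  acdZ c (t / (n + 1)) (acdr n) (acdeps c t n) ξ (n + 1)

lemma acdr_sq (n : ℕ) : Real.exp (acdr n) * Real.exp (acdr n) = n + 1 := by
  rw [← Real.exp_add, acdr, add_halves, Real.exp_log (by positivity)]

lemma acdr_tendsto : Filter.Tendsto acdr Filter.atTop Filter.atTop := by
  unfold acdr
  apply Filter.Tendsto.atTop_div_const (by norm_num)
  exact Real.tendsto_log_atTop.comp
    (Filter.tendsto_atTop_add_const_right _ _ tendsto_natCast_atTop_atTop)

lemma acdeps_tendsto (c t : ℝ) : Filter.Tendsto (acdeps c t) Filter.atTop (nhds 0) := by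
  unfold acdeps
  exact Filter.Tendsto.const_div_atTop (Real.tendsto_exp_atTop.comp acdr_tendsto) _

lemma acd_h_tendsto (t : ℝ) :
    Filter.Tendsto (fun n : ℕ => t / ((n:ℝ) + 1)) Filter.atTop (nhds 0) :=
  Filter.Tendsto.const_div_atTop
    (Filter.tendsto_atTop_add_const_right _ _ tendsto_natCast_atTop_atTop) _

lemma acd_osc_ev {β : ℝ → ℝ} (hβ : Continuous β) (t : ℝ) {η : ℝ} (hη : 0 < η) :
    ∀ᶠ n : ℕ in Filter.atTop, t / ((n:ℝ) + 1) ≤ η ∧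
    ∀ s ∈ Icc 0 t, ∀ s' ∈ Icc 0 t, |s - s'| ≤ t / ((n:ℝ) + 1) → |β s - β s'| ≤ η := by
  have huc := (isCompact_Icc (a := (0:ℝ)) (b := t)).uniformContinuousOn_of_continuous
    hβ.continuousOn
  rw [Metric.uniformContinuousOn_iff] at huc
  obtain ⟨δ, hδ, H⟩ := huc η hη
  filter_upwards [(acd_h_tendsto t).eventually_lt_const hδ,
    (acd_h_tendsto t).eventually_lt_const hη] with n h1 h2
  refine ⟨h2.le, fun s hs s' hs' hss => ?_⟩
  have := H s hs s' hs' (by rw [Real.dist_eq]; linarith)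
  rw [Real.dist_eq] at this; exact this.le

lemma acd_lim_q {β : ℝ → ℝ} (hβ : Continuous β) (h0 : β 0 = 0) (c : ℝ) {t : ℝ} (ht : 0 < t) :
    Filter.Tendsto (fun n : ℕ => (acdZn c t (acdxi β (t / (n + 1))) n).2.2.2.2)
      Filter.atTop (nhds (acdA β t)) := by
  obtain ⟨K, hK⟩ := (isCompact_Icc (a := (0:ℝ)) (b := t)).bddAbove_image
    (f := fun s => Real.exp (β s)) (by fun_prop)
  refine acd_tends (C := t * (2 * K)) (η0 := 1) one_pos fun η h1 h2 => ?_
  filter_upwards [acd_osc_ev hβ t h1] with n hn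
  have hN : ((n + 1 : ℕ) : ℝ) * (t / ((n:ℝ) + 1)) = t := by
    push_cast; field_simp
  have := acdZ_q hβ h0 (c := c) (h := t / ((n:ℝ) + 1)) (r := acdr n) (ε := acdeps c t n) (K := K)
    (η := η) (t := t) (N := n + 1) (by positivity) hN h2 (fun s hs => hK ⟨s, hs, rfl⟩)
    hn.2 (n + 1) le_rfl
  rw [hN] at this
  refine this.trans (le_of_eq (by ring))

lemma acdZn_x {β : ℝ → ℝ} (h0 : β 0 = 0) (c t : ℝ) (n : ℕ) :
    (acdZn c t (acdxi β (t / (n + 1))) n).1 = β t := by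
  rw [acdZn, acdZ_x h0]
  congr 1
  push_cast; field_simp

lemma acdA_mono {β : ℝ → ℝ} (hβ : Continuous β) {s t : ℝ} (hst : s ≤ t) :
    acdA β s ≤ acdA β t := by
  have hc : Continuous fun s => Real.exp (β s) := by fun_prop
  have : acdA β t - acdA β s = ∫ u in s..t, Real.exp (β u) := by
    unfold acdA
    rw [intervalIntegral.integral_interval_sub_left (hc.intervalIntegrable _ _)
      (hc.intervalIntegrable _ _)]
  have h2 : 0 ≤ ∫ u in s..t, Real.exp (β u) :=
    intervalIntegral.integral_nonneg hst fun _ _ => (Real.exp_pos _).le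
  linarith

lemma acdA_nonneg {β : ℝ → ℝ} {t : ℝ} (ht : 0 ≤ t) : 0 ≤ acdA β t :=
  intervalIntegral.integral_nonneg ht fun _ _ => (Real.exp_pos _).le

lemma acd_lim_all {β : ℝ → ℝ} (hβ : Continuous β) (h0 : β 0 = 0) (c : ℝ) {t : ℝ} (ht : 0 < t)
    (hpos : 0 < 1 + c * acdA β t) :
    Filter.Tendsto (fun n : ℕ => (acdZn c t (acdxi β (t / (n + 1))) n).2.1)
      Filter.atTop (nhds (acdA β t)) ∧
    Filter.Tendsto (fun n : ℕ => (acdZn c t (acdxi β (t / (n + 1))) n).2.2.1)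
      Filter.atTop (nhds (acdA β t / (1 + c * acdA β t))) ∧
    Filter.Tendsto (fun n : ℕ => (acdZn c t (acdxi β (t / (n + 1))) n).2.2.2.1)
      Filter.atTop (nhds (Real.exp (2 * c * Real.exp (β t) / (1 + c * acdA β t) - 2 * c))) := by
  obtain ⟨K1, hK1⟩ := (isCompact_Icc (a := (0:ℝ)) (b := t)).bddAbove_image
    (f := fun s => Real.exp (β s)) (by fun_prop)
  set m := min 1 (1 + c * acdA β t) with hm
  have hm0 : 0 < m := lt_min one_pos hpos
  have hmS : ∀ s ∈ Icc 0 t, m ≤ 1 + c * acdA β s := by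
    intro s hs
    rcases le_or_gt 0 c with hc | hc
    · refine (min_le_left _ _).trans ?_
      have := mul_nonneg hc (acdA_nonneg (β := β) hs.1); linarith
    · refine (min_le_right _ _).trans ?_
      have := acdA_mono hβ hs.2
      nlinarith
  set K := max (max 1 |c|) (max K1 (2 / m)) with hKd
  have k1 : 1 ≤ K := (le_max_left _ _).trans (le_max_left _ _)
  have k2 : |c| ≤ K := (le_max_right _ _).trans (le_max_left _ _)
  have k3 : K1 ≤ K := (le_max_left _ _).trans (le_max_right _ _)
  have k4 : 2 / m ≤ K := (le_max_right _ _).trans (le_max_right _ _)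
  clear_value K
  have hK0 : 0 < K := by linarith
  have k5 : 2 / K ≤ m := by
    rw [div_le_iff₀ hK0]; rw [div_le_iff₀ hm0] at k4; linarith
  set η0 := min (1 / (8 * K ^ 3)) (1 / (4 * K ^ 3 * t)) with hη0
  have hη0p : 0 < η0 := by positivity
  have main : ∀ η, 0 < η → η ≤ η0 → ∀ᶠ n : ℕ in Filter.atTop,
      |(acdZn c t (acdxi β (t / (n + 1))) n).2.1 - acdA β t| ≤ t * (4 * K * η) ∧
      |(acdZn c t (acdxi β (t / (n + 1))) n).2.2.1 - acdA β t / (1 + c * acdA β t)|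
        ≤ t * ((K ^ 6 * (8 * t + 2) + 2 * K ^ 3) * η) ∧
      (0 < (acdZn c t (acdxi β (t / (n + 1))) n).2.2.2.1 ∧
      |Real.log (acdZn c t (acdxi β (t / (n + 1))) n).2.2.2.1 -
        (2 * c * Real.exp (β t) / (1 + c * (acdZn c t (acdxi β (t / (n + 1))) n).2.1) - 2 * c)|
        ≤ t * (400 * (K ^ 3) ^ 3 * η)) := by
    intro η h1 h2
    filter_upwards [acd_osc_ev hβ t h1, acdr_tendsto.eventually_gt_atTop (Real.log K),
      (acdeps_tendsto c t).eventually_lt_const (show 0 < 1 / K by positivity)] with n hn hr he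
    have hN : ((n + 1 : ℕ) : ℝ) * (t / ((n:ℝ) + 1)) = t := by
      push_cast; field_simp
    have e8 : 8 * K ^ 3 * η ≤ 1 := by
      have := h2.trans (min_le_left _ _)
      rw [le_div_iff₀ (by positivity)] at this; linarith
    have e4 : 4 * K ^ 3 * t * η ≤ 1 := by
      have := h2.trans (min_le_right _ _)
      rw [le_div_iff₀ (by positivity)] at this; linarith
    have := acdZ_all hβ h0 (c := c) (h := t / ((n:ℝ) + 1)) (r := acdr n) (ε := acdeps c t n)
      (K := K) (η := η) (t := t) (N := n + 1) (by positivity) hN k1 k2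
      (fun s hs => (hK1 ⟨s, hs, rfl⟩).trans k3) (fun s hs => k5.trans (hmS s hs))
      hn.1 e8 e4 hr he hn.2 (n + 1) le_rfl
    rw [hN] at this
    exact this
  have la : Filter.Tendsto (fun n : ℕ => (acdZn c t (acdxi β (t / (n + 1))) n).2.1)
      Filter.atTop (nhds (acdA β t)) := by
    refine acd_tends (C := t * (4 * K)) hη0p fun η h1 h2 => ?_
    filter_upwards [main η h1 h2] with n hn
    exact hn.1.trans (le_of_eq (by ring))
  refine ⟨la, ?_, ?_⟩
  · refine acd_tends (C := t * (K ^ 6 * (8 * t + 2) + 2 * K ^ 3)) hη0p fun η h1 h2 => ?_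
    filter_upwards [main η h1 h2] with n hn
    exact hn.2.1.trans (le_of_eq (by ring))
  · have l1 : Filter.Tendsto (fun n : ℕ =>
        Real.log (acdZn c t (acdxi β (t / (n + 1))) n).2.2.2.1 -
        (2 * c * Real.exp (β t) / (1 + c * (acdZn c t (acdxi β (t / (n + 1))) n).2.1) - 2 * c))
        Filter.atTop (nhds 0) := by
      refine acd_tends (C := t * (400 * (K ^ 3) ^ 3)) hη0p fun η h1 h2 => ?_
      filter_upwards [main η h1 h2] with n hn
      rw [sub_zero]
      exact hn.2.2.2.trans (le_of_eq (by ring))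
    have l2 : Filter.Tendsto (fun n : ℕ =>
        2 * c * Real.exp (β t) / (1 + c * (acdZn c t (acdxi β (t / (n + 1))) n).2.1) - 2 * c)
        Filter.atTop (nhds (2 * c * Real.exp (β t) / (1 + c * acdA β t) - 2 * c)) :=
      ((tendsto_const_nhds).div ((la.const_mul c).const_add 1) hpos.ne').sub_const _
    have l3 := l1.add l2
    rw [zero_add] at l3
    have l4 := (Real.continuous_exp.tendsto _).comp l3
    refine l4.congr' ?_
    filter_upwards [main η0 hη0p le_rfl] with n hn
    simp only [Function.comp_apply, sub_add_cancel]
    exact Real.exp_log hn.2.2.1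

end

section

def acdb {Ω : Type*} (B : ℝ → Ω → ℝ) (ω : Ω) (s : ℝ) : ℝ := B s ω - s / 2

lemma acdb_A {Ω : Type*} (B : ℝ → Ω → ℝ) (t : ℝ) (ω : Ω) : acdA (acdb B ω) t = A B t ω := rfl

lemma acd_hyp {c t : ℝ} (ht : 0 < t) (n : ℕ) :
    0 < acdeps c t n ∧ 4 * |c| * (t / (n + 1)) * Real.exp (acdr n) ≤ acdeps c t n := by
  have h1 := acdr_sq n
  have hp := Real.exp_pos (acdr n)
  constructor
  · unfold acdeps; positivity
  · unfold acdeps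
    rw [le_div_iff₀ hp]
    have : 4 * |c| * (t / (n + 1)) * Real.exp (acdr n) * Real.exp (acdr n)
        = 4 * |c| * (t / (n + 1)) * (Real.exp (acdr n) * Real.exp (acdr n)) := by ring
    rw [this, h1]
    have : 4 * |c| * (t / (n + 1)) * ((n:ℝ) + 1) = 4 * |c| * t := by field_simp
    rw [this]; linarith

variable {Ω : Type*} [MeasurableSpace Ω] {P : Measure Ω} {B : ℝ → Ω → ℝ}

lemma acd_xi_bm (hB : IsBrownianMotion P B) {h : ℝ} (hh : 0 < h) :
    iIndepFun (fun i ω => acdxi (acdb B ω) h i) P ∧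
    (∀ i, Measurable (fun ω => acdxi (acdb B ω) h i)) ∧
    (∀ i, P.map (fun ω => acdxi (acdb B ω) h i) = gaussianReal 0 h.toNNReal) := by
  have e : (fun (i : ℕ) ω => acdxi (acdb B ω) h i)
      = fun (i : ℕ) ω => B ((i + 1 : ℕ) * h) ω - B (i * h) ω := by
    funext i ω; simp only [acdxi, acdb]; push_cast; ring
  have e' : ∀ i : ℕ, (fun ω => acdxi (acdb B ω) h i)
      = fun ω => B ((i + 1 : ℕ) * h) ω - B (i * h) ω := fun i => congrFun e i
  refine ⟨?_, ?_, ?_⟩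
  · rw [e]
    refine hB.indep_increments (fun i => (i:ℝ) * h) ?_ (by simp)
    intro i j hij
    have : (i:ℝ) ≤ j := by exact_mod_cast hij
    simp only; nlinarith
  · intro i; rw [e']
    exact (hB.measurable _).sub (hB.measurable _)
  · intro i; rw [e', hB.gaussian_increments]
    · congr 2; push_cast; ring
    · positivity
    · push_cast; nlinarith

lemma acdb_cont (hB : IsBrownianMotion P B) (ω : Ω) : Continuous (acdb B ω) := by
  unfold acdb; have := hB.continuous_paths ω; fun_prop

lemma acdb_zero (hB : IsBrownianMotion P B) (ω : Ω) : acdb B ω 0 = 0 := by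
  simp [acdb, hB.start]

lemma acdZn_meas (hB : IsBrownianMotion P B) (c : ℝ) {t : ℝ} (ht : 0 < t) (n : ℕ) :
    Measurable (fun ω => acdZn c t (acdxi (acdb B ω) (t / (n + 1))) n) := by
  obtain ⟨h1, h2, h3⟩ := acd_xi_bm hB (h := t / (n + 1)) (by positivity)
  exact (acd_indep (Z := fun k ω => acdZ c (t / (n + 1)) (acdr n) (acdeps c t n)
    (acdxi (acdb B ω) (t / (n + 1))) k) h1 h2 (acdStep_measurable c (t / (n + 1)) (acdr n)
      (acdeps c t n)) (z0 := (0,0,0,1,0)) (fun ω => rfl) (fun k ω => rfl) (n + 1)).1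

lemma acd_A_meas (hB : IsBrownianMotion P B) {t : ℝ} (ht : 0 < t) : Measurable (A B t) := by
  refine measurable_of_tendsto_metrizable
    (f := fun (n : ℕ) ω => (acdZn 0 t (acdxi (acdb B ω) (t / (n + 1))) n).2.2.2.2) ?_ ?_
  · intro n
    have := acdZn_meas hB 0 ht n
    exact this.snd.snd.snd.snd
  · rw [tendsto_pi_nhds]
    intro ω
    exact acd_lim_q (acdb_cont hB ω) (acdb_zero hB ω) 0 ht

lemma acd_star (hB : IsBrownianMotion P B) (c : ℝ) {t : ℝ} (ht : 0 < t)
    {F : ℝ × ℝ → ENNReal} (hF : Continuous F) {C : ENNReal} (hC : C ≠ ⊤) (hFC : ∀ x, F x ≤ C) :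
    ∫⁻ ω, {ω | 0 < 1 + c * A B t ω}.indicator (fun ω =>
      ENNReal.ofReal (Real.exp (2 * c * M B t ω / (1 + c * A B t ω) - 2 * c)) *
      F (B t ω - t / 2 - 2 * Real.log (1 + c * A B t ω), A B t ω / (1 + c * A B t ω))) ω ∂P
    ≤ ∫⁻ ω, F (B t ω - t / 2, A B t ω) ∂P := by
  have := hB.isProbabilityMeasure
  set Z : ℕ → Ω → ℝ × ℝ × ℝ × ℝ × ℝ :=
    fun n ω => acdZn c t (acdxi (acdb B ω) (t / (n + 1))) n with hZ
  have hZm : ∀ n, Measurable (Z n) := fun n => acdZn_meas hB c ht n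
  set f : ℕ → Ω → ENNReal := fun n ω => ENNReal.ofReal (Z n ω).2.2.2.1 *
      F ((Z n ω).1 - 2 * Real.log (1 + c * (Z n ω).2.1), (Z n ω).2.2.1) with hf
  set g : ℕ → Ω → ENNReal := fun n ω => F ((Z n ω).1, (Z n ω).2.2.2.2) with hg
  have hFm := hF.measurable
  have hfm : ∀ n, Measurable (f n) := by
    intro n
    have := hZm n
    simp only [hf]
    refine Measurable.mul (by fun_prop) (hFm.comp ?_)
    have h1 : Measurable fun ω => 1 + c * (Z n ω).2.1 := by fun_prop
    have h2 := Real.measurable_log.comp h1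
    simp only [Function.comp_def] at h2
    fun_prop
  have hgm : ∀ n, Measurable (g n) := by
    intro n
    have := hZm n
    exact hFm.comp (by fun_prop)
  have hle : ∀ n, ∫⁻ ω, f n ω ∂P ≤ ∫⁻ ω, g n ω ∂P := by
    intro n
    obtain ⟨h1, h2, h3⟩ := acd_xi_bm hB (h := t / (n + 1)) (by positivity)
    obtain ⟨k1, k2⟩ := acd_hyp (c := c) ht n
    exact acd_chain (by positivity) k1 k2 h1 h2 h3 (n + 1) F hFm
  have hglim : Filter.Tendsto (fun n => ∫⁻ ω, g n ω ∂P) Filter.atTop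
      (nhds (∫⁻ ω, F (B t ω - t / 2, A B t ω) ∂P)) := by
    refine tendsto_lintegral_of_dominated_convergence (fun _ => C) hgm
      (fun n => Filter.Eventually.of_forall fun ω => hFC _) ?_ ?_
    · simp [hC]
    · refine Filter.Eventually.of_forall fun ω => ?_
      refine (hF.tendsto _).comp ?_
      refine Filter.Tendsto.prodMk_nhds ?_ ?_
      · have : ∀ n, (Z n ω).1 = B t ω - t / 2 := fun n => acdZn_x (acdb_zero hB ω) c t n
        simp only [this]; exact tendsto_const_nhds
      · exact acd_lim_q (acdb_cont hB ω) (acdb_zero hB ω) c ht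
  calc _ ≤ ∫⁻ ω, Filter.liminf (fun n => f n ω) Filter.atTop ∂P := by
        refine lintegral_mono fun ω => ?_
        by_cases hpos : 0 < 1 + c * A B t ω
        · rw [indicator_of_mem (by exact hpos)]
          refine le_of_eq (Filter.Tendsto.liminf_eq ?_).symm
          obtain ⟨l1, l2, l3⟩ := acd_lim_all (acdb_cont hB ω) (acdb_zero hB ω) c ht hpos
          have hx : ∀ n, (Z n ω).1 = B t ω - t / 2 := fun n => acdZn_x (acdb_zero hB ω) c t n
          simp only [hf, hx]
          refine ENNReal.Tendsto.mul (ENNReal.tendsto_ofReal l3) ?_ ((hF.tendsto _).comp ?_) ?_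
          · left; simp [Real.exp_pos]
          · refine Filter.Tendsto.prodMk_nhds ?_ l2
            refine tendsto_const_nhds.sub (Filter.Tendsto.const_mul _ ?_)
            exact Filter.Tendsto.log ((l1.const_mul c).const_add 1) hpos.ne'
          · right; exact ENNReal.ofReal_ne_top
        · rw [indicator_of_notMem (by exact hpos)]; exact zero_le
    _ ≤ Filter.liminf (fun n => ∫⁻ ω, f n ω ∂P) Filter.atTop := lintegral_liminf_le hfm
    _ ≤ Filter.liminf (fun n => ∫⁻ ω, g n ω ∂P) Filter.atTop :=
        Filter.liminf_le_liminf (Filter.Eventually.of_forall hle)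
    _ = _ := hglim.liminf_eq

end

section

variable {Ω : Type*} [MeasurableSpace Ω] {P : Measure Ω} {B : ℝ → Ω → ℝ}

lemma acd_A_nonneg (B : ℝ → Ω → ℝ) {t : ℝ} (ht : 0 < t) (ω : Ω) : 0 ≤ A B t ω :=
  acdA_nonneg (β := acdb B ω) ht.le

lemma acd_M_meas (hB : IsBrownianMotion P B) (t : ℝ) : Measurable (M B t) :=
  Real.measurable_exp.comp ((hB.measurable t).sub measurable_const)

lemma acd_w_meas (hB : IsBrownianMotion P B) {t : ℝ} (ht : 0 < t) (a : ℝ) :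
    Measurable (fun ω => Real.exp (2 * M B t ω / (a + A B t ω) - 2 / a)) := by
  have h1 := acd_A_meas hB ht
  have h2 := acd_M_meas hB t
  fun_prop

lemma acd_main_le (hB : IsBrownianMotion P B) {t a : ℝ} (ht : 0 < t) (ha : 0 < a)
    {f : ℝ → ENNReal} (hf : Continuous f) {C : ENNReal} (hC : C ≠ ⊤) (hfC : ∀ x, f x ≤ C) :
    ∫⁻ ω, ENNReal.ofReal (Real.exp (2 * M B t ω / (a + A B t ω) - 2 / a)) *
      f (a * A B t ω / (a + A B t ω)) ∂P ≤ ∫⁻ ω, f (A B t ω) ∂P := by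
  have h := acd_star hB (1 / a) ht (F := fun x => f x.2) (by fun_prop) hC (fun x => hfC _)
  refine le_trans (lintegral_mono fun ω => ?_) h
  have hA := acd_A_nonneg B ht ω
  have hp : 0 < 1 + 1 / a * A B t ω := by positivity
  rw [indicator_of_mem (by exact hp)]
  have e1 : 2 * (1 / a) * M B t ω / (1 + 1 / a * A B t ω) - 2 * (1 / a)
      = 2 * M B t ω / (a + A B t ω) - 2 / a := by field_simp
  have e2 : A B t ω / (1 + 1 / a * A B t ω) = a * A B t ω / (a + A B t ω) := by field_simp
  simp only [e1, e2]; exact le_rfl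

lemma acd_main_ge (hB : IsBrownianMotion P B) {t a : ℝ} (ht : 0 < t) (ha : 0 < a)
    {f : ℝ → ENNReal} (hf : Continuous f) {C : ENNReal} (hC : C ≠ ⊤) (hfC : ∀ x, f x ≤ C)
    (hf0 : ∀ x, a ≤ x → f x = 0) :
    ∫⁻ ω, f (A B t ω) ∂P ≤
    ∫⁻ ω, ENNReal.ofReal (Real.exp (2 * M B t ω / (a + A B t ω) - 2 / a)) *
      f (a * A B t ω / (a + A B t ω)) ∂P := by
  set G : ℝ × ℝ → ENNReal := fun x =>
    ENNReal.ofReal (Real.exp (2 * Real.exp x.1 / (a + |x.2|) - 2 / a)) *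
      f (a * x.2 / (a + |x.2|)) with hG
  have hd : ∀ x : ℝ × ℝ, a + |x.2| ≠ 0 := fun x => by positivity
  have hGc : Continuous G := by
    refine Continuous.ennreal_mul ?_ ?_ ?_ ?_
    · refine ENNReal.continuous_ofReal.comp (Real.continuous_exp.comp ?_)
      refine Continuous.sub (Continuous.div (by fun_prop) (by fun_prop) hd) continuous_const
    · exact hf.comp (Continuous.div (by fun_prop) (by fun_prop) hd)
    · intro x; left; simp [Real.exp_pos]
    · intro x; right; exact ENNReal.ofReal_ne_top
  have key : ∀ n : ℕ, _ := fun n => acd_star hB (-(1 / a)) ht (F := fun x => min (n : ENNReal) (G x))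
    (by fun_prop) (C := n) (by simp) (fun x => min_le_left _ _)
  set w : Ω → ENNReal := fun ω => ENNReal.ofReal (Real.exp (2 * (-(1 / a)) * M B t ω /
    (1 + -(1 / a) * A B t ω) - 2 * (-(1 / a)))) with hw
  have hAm := acd_A_meas hB ht
  have hMm := acd_M_meas hB t
  have hBm := hB.measurable t
  set g : ℕ → Ω → ENNReal := fun n => {ω | 0 < 1 + -(1 / a) * A B t ω}.indicator (fun ω =>
      w ω * min (n : ENNReal) (G (B t ω - t / 2 - 2 * Real.log (1 + -(1 / a) * A B t ω),
        A B t ω / (1 + -(1 / a) * A B t ω)))) with hg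
  have hgm : ∀ n, Measurable (g n) := by
    intro n
    refine Measurable.indicator ?_ (measurableSet_lt measurable_const (by fun_prop))
    refine Measurable.mul (by simp only [hw]; fun_prop) (measurable_const.min (hGc.measurable.comp ?_))
    have h2 := Real.measurable_log.comp (f := fun ω => 1 + -(1 / a) * A B t ω) (by fun_prop)
    simp only [Function.comp_def] at h2
    fun_prop
  calc _ ≤ ∫⁻ ω, Filter.liminf (fun n => g n ω) Filter.atTop ∂P := by
        refine lintegral_mono fun ω => ?_
        have hA := acd_A_nonneg B ht ω
        by_cases hlt : A B t ω < a
        · have hpos : 0 < 1 + -(1 / a) * A B t ω := by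
            have : A B t ω / a < 1 := by rwa [div_lt_one ha]
            have e : 1 + -(1 / a) * A B t ω = 1 - A B t ω / a := by ring
            linarith
          have hsub : 0 < a - A B t ω := by linarith
          have e0 : 1 + -(1 / a) * A B t ω = (a - A B t ω) / a := by field_simp; ring
          have eα : A B t ω / (1 + -(1 / a) * A B t ω) = a * A B t ω / (a - A B t ω) := by
            rw [e0]; field_simp
          have hα : 0 ≤ a * A B t ω / (a - A B t ω) := by positivity
          have eG : w ω * G (B t ω - t / 2 - 2 * Real.log (1 + -(1 / a) * A B t ω),
              A B t ω / (1 + -(1 / a) * A B t ω)) = f (A B t ω) := by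
            simp only [hG, hw]
            rw [eα, abs_of_nonneg hα, ← mul_assoc, ← ENNReal.ofReal_mul (Real.exp_pos _).le,
              ← Real.exp_add, e0]
            have e1 : Real.exp (B t ω - t / 2 - 2 * Real.log ((a - A B t ω) / a))
                = M B t ω * (a / (a - A B t ω)) ^ 2 := by
              rw [Real.exp_sub, M, two_mul (Real.log _), Real.exp_add, Real.exp_log (by positivity)]
              field_simp
            have e3 : a + a * A B t ω / (a - A B t ω) = a ^ 2 / (a - A B t ω) := by
              field_simp; ring
            rw [e1, e3]
            have e4 : 2 * -(1 / a) * M B t ω / ((a - A B t ω) / a) - 2 * -(1 / a) +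
              (2 * (M B t ω * (a / (a - A B t ω)) ^ 2) / (a ^ 2 / (a - A B t ω)) - 2 / a) = 0 := by
              field_simp; ring
            have e5 : a * (a * A B t ω / (a - A B t ω)) / (a ^ 2 / (a - A B t ω)) = A B t ω := by
              field_simp
            rw [e4, e5]; simp
          refine le_of_eq (Filter.Tendsto.liminf_eq ?_).symm
          rw [← eG]
          set y := G (B t ω - t / 2 - 2 * Real.log (1 + -(1 / a) * A B t ω),
              A B t ω / (1 + -(1 / a) * A B t ω)) with hy
          have hyt : y ≠ ⊤ := by
            rw [hy]; simp only [hG]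
            exact ENNReal.mul_ne_top ENNReal.ofReal_ne_top (ne_top_of_le_ne_top hC (hfC _))
          obtain ⟨N, hN⟩ := ENNReal.exists_nat_gt hyt
          refine tendsto_const_nhds.congr' ?_
          filter_upwards [Filter.eventually_ge_atTop N] with n hn
          have : y ≤ n := hN.le.trans (by exact_mod_cast hn)
          simp only [hg]
          rw [indicator_of_mem (by exact hpos), ← hy, min_eq_right this]
        · rw [hf0 _ (not_lt.1 hlt)]; exact zero_le
    _ ≤ Filter.liminf (fun n => ∫⁻ ω, g n ω ∂P) Filter.atTop := lintegral_liminf_le hgm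
    _ ≤ Filter.liminf (fun n : ℕ => ∫⁻ ω, ENNReal.ofReal (Real.exp (2 * M B t ω / (a + A B t ω) - 2 / a)) *
      f (a * A B t ω / (a + A B t ω)) ∂P) Filter.atTop := by
        refine Filter.liminf_le_liminf (Filter.Eventually.of_forall fun n => (key n).trans ?_)
        refine lintegral_mono fun ω => (min_le_right _ _).trans (le_of_eq ?_)
        simp only [hG, abs_of_nonneg (acd_A_nonneg B ht ω)]; rfl
    _ = _ := by simp

lemma acd_main (hB : IsBrownianMotion P B) {t a : ℝ} (ht : 0 < t) (ha : 0 < a)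
    {f : ℝ → ENNReal} (hf : Continuous f) {C : ENNReal} (hC : C ≠ ⊤) (hfC : ∀ x, f x ≤ C)
    (hf0 : ∀ x, a ≤ x → f x = 0) :
    ∫⁻ ω, ENNReal.ofReal (Real.exp (2 * M B t ω / (a + A B t ω) - 2 / a)) *
      f (a * A B t ω / (a + A B t ω)) ∂P = ∫⁻ ω, f (A B t ω) ∂P :=
  le_antisymm (acd_main_le hB ht ha hf hC hfC) (acd_main_ge hB ht ha hf hC hfC hf0)

lemma acd_put (hB : IsBrownianMotion P B) {t a : ℝ} (ht : 0 < t) (ha : 0 < a) :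
    a * ∫ ω, (a + A B t ω)⁻¹ * Real.exp (2 * M B t ω / (a + A B t ω)) ∂P
      = Real.exp (2 / a) * ((∫ ω, max (a - A B t ω) 0 ∂P) / a) := by
  have h := acd_main hB ht ha (f := fun z => min 1 (ENNReal.ofReal ((a - z) / a)))
    (continuous_const.min (ENNReal.continuous_ofReal.comp (by fun_prop)))
    (C := 1) (by simp) (fun x => min_le_left _ _) (by
      intro x hx
      rw [ENNReal.ofReal_of_nonpos]; · simp
      exact div_nonpos_of_nonpos_of_nonneg (by linarith) ha.le)
  have hAm := acd_A_meas hB ht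
  have hMm := acd_M_meas hB t
  have e1 : ∫ ω, (a / (a + A B t ω)) * Real.exp (2 * M B t ω / (a + A B t ω) - 2 / a) ∂P
      = ∫ ω, max (a - A B t ω) 0 / a ∂P := by
    rw [integral_eq_lintegral_of_nonneg_ae, integral_eq_lintegral_of_nonneg_ae]
    · congr 1
      convert h using 3 with ω ω
      · have hA := acd_A_nonneg B ht ω
        have e : (a - a * A B t ω / (a + A B t ω)) / a = a / (a + A B t ω) := by field_simp; ring
        rw [e, min_eq_right, mul_comm, ENNReal.ofReal_mul (Real.exp_pos _).le]
        rw [ENNReal.ofReal_le_one, div_le_one (by positivity)]; linarith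
      · have hA := acd_A_nonneg B ht ω
        rw [min_eq_right]
        · rcases le_total 0 (a - A B t ω) with h' | h'
          · rw [max_eq_left h']
          · rw [max_eq_right h', zero_div, ENNReal.ofReal_zero, ENNReal.ofReal_of_nonpos]
            exact div_nonpos_of_nonpos_of_nonneg h' ha.le
        · rw [ENNReal.ofReal_le_one, div_le_one (by positivity)]; linarith
    · exact Filter.Eventually.of_forall fun ω => by positivity
    · exact Measurable.aestronglyMeasurable (by fun_prop)
    · refine Filter.Eventually.of_forall fun ω => ?_
      have hA := acd_A_nonneg B ht ω
      simp only [Pi.zero_apply]; positivity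
    · exact Measurable.aestronglyMeasurable (by fun_prop)
  rw [← integral_div, ← e1, ← integral_const_mul, ← integral_const_mul]
  congr 1; funext ω
  rw [Real.exp_sub]
  have := Real.exp_pos (2 / a)
  field_simp

lemma acd_cdf' (hB : IsBrownianMotion P B) {t a : ℝ} (ht : 0 < t) (ha : 0 < a) :
    ∫⁻ ω, ENNReal.ofReal (Real.exp (2 * M B t ω / (a + A B t ω) - 2 / a)) ∂P
      = P {ω | A B t ω < a} := by
  have hAm := acd_A_meas hB ht
  have hMm := acd_M_meas hB t
  set f : ℕ → ℝ → ENNReal := fun n z => min 1 ((n : ENNReal) * ENNReal.ofReal (a - z)) with hf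
  have hfc : ∀ n, Continuous (f n) := by
    intro n
    have : Continuous fun z => (n : ENNReal) * ENNReal.ofReal (a - z) :=
      (ENNReal.continuous_const_mul (by simp)).comp (ENNReal.continuous_ofReal.comp (by fun_prop))
    exact continuous_const.min this
  have hfm : ∀ z, Monotone fun n => f n z := by
    intro z m n hmn
    simp only [hf]; gcongr
  have hf0 : ∀ n x, a ≤ x → f n x = 0 := by
    intro n x hx
    simp only [hf]; rw [ENNReal.ofReal_of_nonpos (by linarith)]; simp
  have hflim : ∀ z, z < a → Filter.Tendsto (fun n => f n z) Filter.atTop (nhds 1) := by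
    intro z hz
    have hp : ENNReal.ofReal (a - z) ≠ 0 := by simp [hz]
    obtain ⟨N, hN⟩ := ENNReal.exists_nat_mul_gt hp ENNReal.one_ne_top
    refine tendsto_const_nhds.congr' ?_
    filter_upwards [Filter.eventually_ge_atTop N] with n hn
    simp only [hf]
    rw [min_eq_left]
    refine hN.le.trans ?_
    gcongr
  have h : ∀ n, _ := fun n => acd_main hB ht ha (hfc n) (C := 1) (by simp)
    (fun x => min_le_left _ _) (hf0 n)
  have l1 : Filter.Tendsto (fun n => ∫⁻ ω, f n (A B t ω) ∂P) Filter.atTop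
      (nhds (∫⁻ ω, {ω | A B t ω < a}.indicator 1 ω ∂P)) := by
    refine lintegral_tendsto_of_tendsto_of_monotone
      (fun n => ((hfc n).measurable.comp hAm).aemeasurable)
      (Filter.Eventually.of_forall fun ω => hfm _) (Filter.Eventually.of_forall fun ω => ?_)
    by_cases hlt : A B t ω < a
    · rw [indicator_of_mem (by exact hlt)]; exact hflim _ hlt
    · rw [indicator_of_notMem (by exact hlt)]
      simp only [hf0 _ _ (not_lt.1 hlt)]; exact tendsto_const_nhds
  have l2 : Filter.Tendsto (fun n => ∫⁻ ω, ENNReal.ofReal (Real.exp (2 * M B t ω / (a + A B t ω) - 2 / a)) *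
      f n (a * A B t ω / (a + A B t ω)) ∂P) Filter.atTop
      (nhds (∫⁻ ω, ENNReal.ofReal (Real.exp (2 * M B t ω / (a + A B t ω) - 2 / a)) * 1 ∂P)) := by
    refine lintegral_tendsto_of_tendsto_of_monotone
      (fun n => ?_)
      (Filter.Eventually.of_forall fun ω => ?_) (Filter.Eventually.of_forall fun ω => ?_)
    · refine Measurable.aemeasurable (Measurable.mul (by fun_prop) ((hfc n).measurable.comp (by fun_prop)))
    · intro m n hmn
      exact mul_le_mul' le_rfl (hfm _ hmn)
    · refine ENNReal.Tendsto.const_mul (hflim _ ?_) (by simp)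
      have hA := acd_A_nonneg B ht ω
      rw [div_lt_iff₀ (by positivity)]; nlinarith
  simp only [h] at l2
  have := tendsto_nhds_unique l2 l1
  rw [lintegral_indicator_one (measurableSet_lt hAm measurable_const)] at this
  simpa using this

lemma acd_cdf (hB : IsBrownianMotion P B) {t a : ℝ} (ht : 0 < t) (ha : 0 < a) :
    ∫ ω, Real.exp (2 * M B t ω / (a + A B t ω)) ∂P
      = Real.exp (2 / a) * P.real {ω | A B t ω < a} := by
  have h := acd_cdf' hB ht ha
  rw [Measure.real, ← h, ← integral_eq_lintegral_of_nonneg_ae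
    (Filter.Eventually.of_forall fun ω => by positivity)
    (acd_w_meas hB ht a).aestronglyMeasurable, ← integral_const_mul]
  congr 1; funext ω; rw [← Real.exp_add]; congr 1; ring

lemma acd_atom (hB : IsBrownianMotion P B) {t a : ℝ} (ht : 0 < t) (ha : 0 < a) :
    P {ω | A B t ω = a} = 0 := by
  have := hB.isProbabilityMeasure
  have hAm := acd_A_meas hB ht
  have h1 : ∀ a', a < a' → P {ω | A B t ω ≤ a} ≤
      ENNReal.ofReal (Real.exp (2 / a - 2 / a')) * P {ω | A B t ω < a} := by
    intro a' h'
    have ha' : 0 < a' := ha.trans h'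
    calc P {ω | A B t ω ≤ a} ≤ P {ω | A B t ω < a'} :=
          measure_mono fun ω (hω : _ ≤ _) => lt_of_le_of_lt hω h'
      _ = _ := (acd_cdf' hB ht ha').symm
      _ ≤ ∫⁻ ω, ENNReal.ofReal (Real.exp (2 / a - 2 / a')) *
          ENNReal.ofReal (Real.exp (2 * M B t ω / (a + A B t ω) - 2 / a)) ∂P := by
          refine lintegral_mono fun ω => ?_
          have hA := acd_A_nonneg B ht ω
          have hM : 0 < M B t ω := Real.exp_pos _
          rw [← ENNReal.ofReal_mul (Real.exp_pos _).le, ← Real.exp_add]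
          refine ENNReal.ofReal_le_ofReal (Real.exp_le_exp.2 ?_)
          have : 2 * M B t ω / (a' + A B t ω) ≤ 2 * M B t ω / (a + A B t ω) := by gcongr
          linarith
      _ = _ := by rw [lintegral_const_mul _ (acd_w_meas hB ht a).ennreal_ofReal, acd_cdf' hB ht ha]
  have h2 : P {ω | A B t ω ≤ a} ≤ P {ω | A B t ω < a} := by
    have l : Filter.Tendsto (fun a' : ℝ => ENNReal.ofReal (Real.exp (2 / a - 2 / a')) *
        P {ω | A B t ω < a}) (nhdsWithin a (Ioi a)) (nhds (P {ω | A B t ω < a})) := by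
      have e : P {ω | A B t ω < a} = ENNReal.ofReal (Real.exp (2 / a - 2 / a)) *
        P {ω | A B t ω < a} := by simp
      nth_rewrite 2 [e]
      refine ENNReal.Tendsto.mul_const ?_ (Or.inr (measure_ne_top _ _))
      refine ENNReal.tendsto_ofReal ?_
      have : ContinuousAt (fun a' : ℝ => Real.exp (2 / a - 2 / a')) a := by
        fun_prop (disch := exact ha.ne')
      exact this.tendsto.mono_left nhdsWithin_le_nhds
    refine ge_of_tendsto l ?_
    filter_upwards [self_mem_nhdsWithin] with a' h' using h1 a' h'
  have e : {ω | A B t ω = a} = {ω | A B t ω ≤ a} \ {ω | A B t ω < a} := by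
    ext ω; simp [le_antisymm_iff]
  have hsub : {ω | A B t ω < a} ⊆ {ω | A B t ω ≤ a} := fun ω (hω : A B t ω < a) => show A B t ω ≤ a from hω.le
  rw [e, measure_sdiff hsub
    (measurableSet_lt hAm measurable_const).nullMeasurableSet (measure_ne_top _ _)]
  exact tsub_eq_zero_of_le h2

lemma acd_mean (hB : IsBrownianMotion P B) {t : ℝ} (ht : 0 < t) :
    Integrable (A B t) P ∧ ∫ ω, A B t ω ∂P = t := by
  have := hB.isProbabilityMeasure
  have hAm := acd_A_meas hB ht
  have hone : ∀ s, 0 ≤ s → ∫⁻ ω, ENNReal.ofReal (Real.exp (B s ω - s / 2)) ∂P = 1 := by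
    intro s hs
    have hl : P.map (B s) = gaussianReal 0 s.toNNReal := by
      have := hB.gaussian_increments 0 s le_rfl hs
      simpa [hB.start] using this
    have hm := mgf_gaussianReal hl 1
    have hi : Integrable (fun ω => Real.exp (1 * B s ω)) P := by
      have := integrable_exp_mul_gaussianReal (μ := 0) (v := s.toNNReal) 1
      rw [← hl] at this
      exact this.comp_measurable (hB.measurable s)
    have hi' : Integrable (fun ω => Real.exp (B s ω - s / 2)) P := by
      have := hi.mul_const (Real.exp (-(s/2)))
      refine this.congr (Filter.Eventually.of_forall fun ω => ?_)
      simp only [← Real.exp_add]; congr 1; ring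
    rw [← ofReal_integral_eq_lintegral_ofReal hi'
      (Filter.Eventually.of_forall fun ω => (Real.exp_pos _).le)]
    have : ∫ ω, Real.exp (B s ω - s / 2) ∂P = mgf (B s) P 1 * Real.exp (-(s/2)) := by
      rw [mgf, ← integral_mul_const]
      congr 1; funext ω; rw [← Real.exp_add]; congr 1; ring
    rw [this, hm, ← Real.exp_add, Real.coe_toNNReal _ hs]
    norm_num
  have hj : Measurable (Function.uncurry fun (ω : Ω) (s : ℝ) => ENNReal.ofReal (Real.exp (B s ω - s / 2))) := by
    have h0 : Measurable (Function.uncurry B) :=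
      measurable_uncurry_of_continuous_of_measurable hB.continuous_paths hB.measurable
    have h1 : Measurable fun p : Ω × ℝ => B p.2 p.1 := h0.comp measurable_swap
    simp only [Function.uncurry_def]
    fun_prop
  have hA : ∀ ω, ENNReal.ofReal (A B t ω) =
      ∫⁻ s in Ioc 0 t, ENNReal.ofReal (Real.exp (B s ω - s / 2)) := by
    intro ω
    have hc : Continuous fun s => Real.exp (B s ω - s / 2) := by
      have := hB.continuous_paths ω; fun_prop
    rw [A, intervalIntegral.integral_of_le ht.le, ofReal_integral_eq_lintegral_ofReal]
    · exact hc.integrableOn_Ioc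
    · exact Filter.Eventually.of_forall fun ω => (Real.exp_pos _).le
  have hE : ∫⁻ ω, ENNReal.ofReal (A B t ω) ∂P = ENNReal.ofReal t := by
    simp only [hA]
    rw [lintegral_lintegral_swap hj.aemeasurable]
    rw [setLIntegral_congr_fun measurableSet_Ioc (fun s hs => hone s hs.1.le)]
    simp
  have hnn : 0 ≤ᵐ[P] A B t := Filter.Eventually.of_forall fun ω => acd_A_nonneg B ht ω
  constructor
  · refine ⟨hAm.aestronglyMeasurable, ?_⟩
    rw [hasFiniteIntegral_iff_ofReal hnn, hE]; simp
  · rw [integral_eq_lintegral_of_nonneg_ae hnn hAm.aestronglyMeasurable, hE,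
      ENNReal.toReal_ofReal ht.le]

end

section
variable {Ω : Type*} [MeasurableSpace Ω] {P : Measure Ω} {B : ℝ → Ω → ℝ}

lemma acd_deriv (hB : IsBrownianMotion P B) {t a : ℝ} (ht : 0 < t) (ha : 0 < a) :
    HasDerivAt (fun a => ∫ ω, max (A B t ω - a) 0 ∂P) (-(1 - P.real {ω | A B t ω < a})) a := by
  have := hB.isProbabilityMeasure
  have hAm := acd_A_meas hB ht
  obtain ⟨hi, hmean⟩ := acd_mean hB ht
  have hat := acd_atom hB ht ha
  have hne : ∀ᵐ ω ∂P, A B t ω ≠ a := by rw [ae_iff]; simpa using hat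
  have hS : MeasurableSet {ω | A B t ω < a} := measurableSet_lt hAm measurable_const
  have key := (hasDerivAt_integral_of_dominated_loc_of_lip (μ := P) (𝕜 := ℝ)
    (F := fun a ω => max (A B t ω - a) 0) (x₀ := a) (s := univ) (bound := fun _ => 1)
    (F' := fun ω => -(1 - {ω | A B t ω < a}.indicator (fun _ => (1:ℝ)) ω)) Filter.univ_mem
    (Filter.Eventually.of_forall fun b => Measurable.aestronglyMeasurable (by fun_prop))
    ((hi.sub (integrable_const a)).pos_part)
    (Measurable.aestronglyMeasurable ((measurable_const.sub
      (measurable_const.indicator hS)).neg)) ?_ (integrable_const 1) ?_).2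
  · refine key.congr_deriv ?_
    rw [integral_neg, integral_sub (integrable_const 1) ((integrable_const 1).indicator hS),
      integral_indicator_const _ hS]
    simp
  · refine Filter.Eventually.of_forall fun ω => ?_
    refine LipschitzOnWith.of_dist_le_mul fun x _ y _ => ?_
    simp only [Real.dist_eq]
    refine (abs_max_sub_max_le_abs _ _ _).trans ?_
    rw [show A B t ω - x - (A B t ω - y) = -(x - y) by ring, abs_neg]
    simp
  · filter_upwards [hne] with ω hω
    rcases lt_or_gt_of_ne hω with h | h
    · rw [indicator_of_mem (by exact h)]
      refine ((hasDerivAt_const a (0:ℝ)).congr_of_eventuallyEq ?_).congr_deriv (by simp)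
      filter_upwards [Ioi_mem_nhds h] with b hb
      exact max_eq_right (by rw [mem_Ioi] at hb; linarith)
    · rw [indicator_of_notMem (by exact not_lt.2 h.le)]
      refine (((hasDerivAt_id a).const_sub (A B t ω)).congr_of_eventuallyEq ?_).congr_deriv (by simp)
      filter_upwards [Iio_mem_nhds h] with b hb
      exact max_eq_left (by rw [mem_Iio] at hb; linarith)

lemma acd_parity (hB : IsBrownianMotion P B) {t : ℝ} (ht : 0 < t) (a : ℝ) :
    ∫ ω, max (A B t ω - a) 0 ∂P = t - a + ∫ ω, max (a - A B t ω) 0 ∂P := by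
  have := hB.isProbabilityMeasure
  obtain ⟨hi, hmean⟩ := acd_mean hB ht
  have h1 : Integrable (fun ω => A B t ω - a) P := hi.sub (integrable_const a)
  have h2 : Integrable (fun ω => max (a - A B t ω) 0) P := ((integrable_const a).sub hi).pos_part
  have e : ∀ ω, max (A B t ω - a) 0 = (A B t ω - a) + max (a - A B t ω) 0 := by
    intro ω
    rcases le_total (A B t ω) a with h | h
    · rw [max_eq_right (by linarith), max_eq_left (by linarith)]; ring
    · rw [max_eq_left (by linarith), max_eq_right (by linarith)]; ring
  simp only [e]
  rw [integral_add h1 h2, integral_sub hi (integrable_const a), hmean]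
  simp

end

variable {Ω : Type*} [MeasurableSpace Ω] (P : MeasureTheory.Measure Ω) (B : ℝ → Ω → ℝ)

theorem asian_call_delta (hB : IsBrownianMotion P B)
    (κ σ r τ S₀ : ℝ) (hκ : 0 < κ) (hσ : 0 < σ) (hτ : 0 < τ) (hS : 0 < S₀) :
    HasDerivAt
      (fun S => S / (τ * σ ^ 2) * Real.exp (-r * τ) *
        ∫ ω, max (A B (σ ^ 2 * τ) ω - σ ^ 2 * κ * τ / S) 0 ∂P)
      (Real.exp (-r * τ) + κ / S₀ *
        Real.exp (-r * τ - 2 / (σ ^ 2 * κ * τ / S₀)) *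
        (σ ^ 2 * κ * τ / S₀ *
            (∫ ω, (σ ^ 2 * κ * τ / S₀ + A B (τ * σ ^ 2) ω)⁻¹ *
              Real.exp (2 * M B (τ * σ ^ 2) ω / (σ ^ 2 * κ * τ / S₀ + A B (τ * σ ^ 2) ω)) ∂P)
          - ∫ ω, Real.exp (2 * M B (τ * σ ^ 2) ω
              / (σ ^ 2 * κ * τ / S₀ + A B (τ * σ ^ 2) ω)) ∂P)) S₀ := by
  have ht : 0 < τ * σ ^ 2 := by positivity
  have ha : 0 < σ ^ 2 * κ * τ / S₀ := by positivity
  rw [mul_comm (σ ^ 2) τ, acd_put hB ht ha, acd_cdf hB ht ha]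
  have hd := acd_deriv hB ht ha
  have hq : HasDerivAt (fun S : ℝ => σ ^ 2 * κ * τ / S) (-(σ ^ 2 * κ * τ) / S₀ ^ 2) S₀ := by
    have := (hasDerivAt_inv hS.ne').const_mul (σ ^ 2 * κ * τ)
    simp only [← div_eq_mul_inv] at this
    exact this.congr_deriv (by ring)
  have hc := hd.comp S₀ hq
  have hl : HasDerivAt (fun S : ℝ => S / (τ * σ ^ 2) * Real.exp (-r * τ))
      (1 / (τ * σ ^ 2) * Real.exp (-r * τ)) S₀ :=
    ((hasDerivAt_id S₀).div_const _).mul_const _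
  have hf := hl.mul hc
  refine hf.congr_deriv ?_
  simp only [Function.comp_apply]
  rw [acd_parity hB ht, Real.exp_sub]
  have := Real.exp_pos (2 / (σ ^ 2 * κ * τ / S₀))
  set a := σ ^ 2 * κ * τ / S₀ with hadef
  generalize Real.exp (2 / a) = E at *
  generalize P.real {ω | A B (τ * σ ^ 2) ω < a} = p at *
  generalize ∫ ω, max (a - A B (τ * σ ^ 2) ω) 0 ∂P = J at *
  rw [hadef]
  field_simp
  ring
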